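/- arXiv:1607.02381 — 2 statements merged into one kernel-verified Lean document; each statement's English description precedes it below -/
import Mathlib

section
/- There exist a constant c > 0 and α₀ ∈ (0,1/2) such that for every α ∈ (α₀, 1/2): liminf over odd n → ∞ of [M(Y^n | maj(X^n)) − n/4] ≥ −(1 − 2α)^2/(8πα(1 − α)) − c(1 − 2α)^4, i.e., M(Y^n | maj(X^n)) ≥ (n − (1 − 2α)^2/(2πα(1 − α)))/4 − O((1 − 2α)^4) + o(1). -/
/-!
Write `ρ = 1 - 2α`, `f = ±1`-valued majority, and `T_ρ f (y) = E[f(X) | Y = y]`. Given the past and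
`b(X)`, let `D` be the conditional mean of the next `±1`-valued bit; then `Q (1 - Q) = (1 - D²) / 4`,
and `D² ≤ Phi D`, where `Phi` is twice the divergence of the bit from a fair coin. By the chain rule
the sum of these divergences is the divergence of `Y^n` given `b(X)` from uniform, that is, the mutual
information between `Y^n` and `b(X)`. Hence (`smse_ge`, `noisySMSE_ge`)

  `M(Y^n | b(X^n)) ≥ n / 4 - E[Phi(T_ρ f)] / 4`.

Since `Phi m ≤ m² + (2/3) m⁴` on `[-1, 1]`, it remains to bound two moments of `T_ρ f`. As `f` is
balanced, `E[(T_ρ f)²] ≤ ρ² W1 f + ρ⁴` (`ex_nz_sq_le_W1`), and the level-one weight of majority is the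
inverse of the Wallis product, so `W1 f → 2/π` (`W1_maj_le`). Bonami's lemma (`hypercontractive`) gives
`E[(T_ρ f)⁴] ≤ E[(T_{2ρ} f)²]² ≤ 16 ρ⁴` for `ρ ≤ 1/2`.
-/

open Finset MeasureTheory

noncomputable section

/-- Conditional probability that coordinate `k` equals `true` given the coordinates
before `k`, under the (possibly unnormalized) pmf `μ` on `{0,1}^n`. -/
def condQ {n : ℕ} (μ : (Fin n → Bool) → ℝ) (k : Fin n) (x : Fin n → Bool) : ℝ :=
  (∑ y ∈ Finset.univ.filter
      (fun y : Fin n → Bool => (∀ i : Fin n, i < k → y i = x i) ∧ y k = true), μ y) /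
  (∑ y ∈ Finset.univ.filter
      (fun y : Fin n → Bool => ∀ i : Fin n, i < k → y i = x i), μ y)

/-- The `k`-th term `E[Q_k (1 - Q_k)]` of the sequential mean squared error. -/
def smseTerm {n : ℕ} (μ : (Fin n → Bool) → ℝ) (k : Fin n) : ℝ :=
  ∑ x : Fin n → Bool, μ x * (condQ μ k x * (1 - condQ μ k x))

/-- The sequential mean squared error `M(U^n) = Σ_k E[Q_k (1 - Q_k)]`. -/
def smse {n : ℕ} (μ : (Fin n → Bool) → ℝ) : ℝ := ∑ k : Fin n, smseTerm μ k

/-- The uniform pmf on `{0,1}^n`. -/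
def unif (n : ℕ) : (Fin n → Bool) → ℝ := fun _ => ((2 : ℝ) ^ n)⁻¹

/-- The SMSE of `μ` given the side information `b` :
`M(X^n | b(X^n)) = Σ_c Σ_k E[Q_k (1-Q_k)]` where `Q_k = P[X_k = 1 | X^{k-1}, b(X^n)]`. -/
def condSMSE {n : ℕ} (μ : (Fin n → Bool) → ℝ) (b : (Fin n → Bool) → Bool) : ℝ :=
  ∑ c : Bool, smse (fun x => if b x = c then μ x else 0)

/-- Hamming weight. -/
def hw {n : ℕ} (x : Fin n → Bool) : ℕ := (Finset.univ.filter (fun i => x i = true)).card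

/-- The majority function: `1` iff the Hamming weight exceeds `n/2`. -/
def majF (n : ℕ) : (Fin n → Bool) → Bool := fun x => decide (n < 2 * hw x)

/-- The joint pmf `y ↦ P[Y^n = y, b(X^n) = c]` where `X^n` is uniform and
`Y^n = X^n ⊕ Z^n` with `Z^n` i.i.d. Bernoulli(α). -/
def noisyPMF (n : ℕ) (α : ℝ) (b : (Fin n → Bool) → Bool) (c : Bool) :
    (Fin n → Bool) → ℝ :=
  fun y => ∑ x : Fin n → Bool,
    if b x = c then ((2 : ℝ) ^ n)⁻¹ * ∏ i : Fin n, (if y i = x i then 1 - α else α) else 0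

/-- The noisy SMSE `M(Y^n | b(X^n))`. -/
def noisySMSE (n : ℕ) (α : ℝ) (b : (Fin n → Bool) → Bool) : ℝ :=
  ∑ c : Bool, smse (noisyPMF n α b c)

/-- The binary entropy function (base 2). -/
def binEnt (p : ℝ) : ℝ := -(p * Real.logb 2 p) - (1 - p) * Real.logb 2 (1 - p)

/-- `μ(α) = h(arccos(1-2α)/π)`. -/
def muF (α : ℝ) : ℝ := binEnt (Real.arccos (1 - 2 * α) / Real.pi)

/-- Base-2 Shannon entropy of a pmf on a finite type. -/
def entropy {β : Type*} [Fintype β] (p : β → ℝ) : ℝ := ∑ x : β, -(p x * Real.logb 2 (p x))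

open scoped Classical in
/-- Pushforward pmf along `f`. -/
def push {β γ : Type*} [Fintype β] (μ : β → ℝ) (f : β → γ) : γ → ℝ :=
  fun c => ∑ x ∈ Finset.univ.filter (fun x => f x = c), μ x

/-- The pmf of a majority random vector: uniform on `{v : w(v) > n/2}`. -/
def majPMF (n : ℕ) : (Fin n → Bool) → ℝ :=
  fun v => if n < 2 * hw v then
    (((Finset.univ.filter (fun u : Fin n → Bool => n < 2 * hw u)).card : ℝ))⁻¹ else 0

/-- Standard Gaussian density. -/
def stdPdf (t : ℝ) : ℝ := Real.exp (-(t ^ 2) / 2) / Real.sqrt (2 * Real.pi)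

/-- Gaussian tail function `Q(u) = P[G > u]`. -/
def gaussQ (u : ℝ) : ℝ := ∫ s in Set.Ioi u, stdPdf s

/-- Base-2 conditional Shannon entropy `H(C | Y)` for the joint pmf `J`. -/
def condEntBool {β : Type*} [Fintype β] (J : β → Bool → ℝ) : ℝ :=
  ∑ y : β, ∑ c : Bool, -(J y c * Real.logb 2 (J y c / (∑ c' : Bool, J y c')))

end

/-! ### Logarithmic inequalities -/

/-- The difference of the two sides has derivative `x³ / (1 + x)`, so it is minimal at `x = 0`. -/
lemma log_one_add_le_cubic {x : ℝ} (hx : -1 < x) :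
    Real.log (1 + x) ≤ x - x ^ 2 / 2 + x ^ 3 / 3 := by
  have hd : ∀ y : ℝ, -1 < y → HasDerivAt
      (fun y : ℝ => y - y ^ 2 / 2 + y ^ 3 / 3 - Real.log (1 + y)) (y ^ 3 / (1 + y)) y := by
    intro y hy
    have h0 : (1 + y) ≠ 0 := by linarith
    have h1 := ((((hasDerivAt_id y).sub (((hasDerivAt_id y).pow 2).div_const 2)).add
      (((hasDerivAt_id y).pow 3).div_const 3)).sub
      (((hasDerivAt_id y).const_add 1).log h0))
    refine h1.congr_deriv ?_
    simp only [id, Nat.cast_ofNat]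
    field_simp
    ring
  rcases le_total 0 x with h | h
  · have hm : MonotoneOn (fun y : ℝ => y - y ^ 2 / 2 + y ^ 3 / 3 - Real.log (1 + y))
        (Set.Ici 0) := by
      apply monotoneOn_of_deriv_nonneg (convex_Ici 0)
      · intro y hy
        exact (hd y (by linarith [Set.mem_Ici.1 hy])).continuousAt.continuousWithinAt
      · intro y hy
        rw [interior_Ici] at hy
        exact (hd y (by linarith [Set.mem_Ioi.1 hy])).differentiableAt.differentiableWithinAt
      · intro y hy
        rw [interior_Ici] at hy
        have hy' := Set.mem_Ioi.1 hy
        rw [(hd y (by linarith)).deriv]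
        positivity
    have := hm Set.self_mem_Ici (Set.mem_Ici.2 h) h
    norm_num at this
    linarith
  · have hm : AntitoneOn (fun y : ℝ => y - y ^ 2 / 2 + y ^ 3 / 3 - Real.log (1 + y))
        (Set.Ioc (-1) 0) := by
      apply antitoneOn_of_deriv_nonpos (convex_Ioc _ _)
      · intro y hy
        exact (hd y hy.1).continuousAt.continuousWithinAt
      · intro y hy
        rw [interior_Ioc] at hy
        exact (hd y hy.1).differentiableAt.differentiableWithinAt
      · intro y hy
        rw [interior_Ioc] at hy
        rw [(hd y hy.1).deriv]
        have h3 : y ^ 3 ≤ 0 := by nlinarith [hy.2, sq_nonneg y]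
        exact div_nonpos_of_nonpos_of_nonneg h3 (by linarith [hy.1])
    have := hm ⟨hx, h⟩ ⟨by norm_num, le_refl _⟩ h
    norm_num at this
    linarith

/-- Twice the Kullback-Leibler divergence (in nats) of the `{±1}`-valued law with mean `m` from the
fair coin. -/
noncomputable def Phi (m : ℝ) : ℝ := (1 + m) * Real.log (1 + m) + (1 - m) * Real.log (1 - m)

lemma mul_log_le {m : ℝ} (h : -1 ≤ m) :
    (1 + m) * Real.log (1 + m) ≤ (1 + m) * (m - m ^ 2 / 2 + m ^ 3 / 3) := by
  rcases h.eq_or_lt with h | h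
  · subst h; norm_num
  · exact mul_le_mul_of_nonneg_left (log_one_add_le_cubic h) (by linarith)

lemma Phi_le {m : ℝ} (h : |m| ≤ 1) : Phi m ≤ m ^ 2 + 2 / 3 * m ^ 4 := by
  have h1 := mul_log_le (abs_le.1 h).1
  have h2 := mul_log_le (m := -m) (by linarith [(abs_le.1 h).2])
  unfold Phi
  rw [← sub_eq_add_neg] at h2
  nlinarith

lemma le_Phi_of_nonneg {m : ℝ} (h0 : 0 ≤ m) (h : m ≤ 1) : m ^ 2 ≤ Phi m := by
  have hm : MonotoneOn (fun m => Phi m - m ^ 2) (Set.Icc 0 1) := by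
    have hd : ∀ y ∈ Set.Ioo (0:ℝ) 1, HasDerivAt (fun m => Phi m - m ^ 2)
        (Real.log (1 + y) - Real.log (1 - y) - 2 * y) y := by
      intro y hy
      have a1 : (1 + y) ≠ 0 := by linarith [hy.1]
      have a2 : (1 - y) ≠ 0 := by linarith [hy.2]
      have u1 := (hasDerivAt_id y).const_add 1
      have u2 := (hasDerivAt_id y).const_sub 1
      have := ((u1.mul (u1.log a1)).add (u2.mul (u2.log a2))).sub ((hasDerivAt_id y).pow 2)
      refine this.congr_deriv ?_
      simp only [id, Nat.cast_ofNat]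
      field_simp
      ring
    apply monotoneOn_of_deriv_nonneg (convex_Icc 0 1)
    · unfold Phi
      have c1 : Continuous fun m : ℝ => (1 + m) * Real.log (1 + m) :=
        Real.continuous_mul_log.comp (by fun_prop : Continuous fun m : ℝ => 1 + m)
      have c2 : Continuous fun m : ℝ => (1 - m) * Real.log (1 - m) :=
        Real.continuous_mul_log.comp (by fun_prop : Continuous fun m : ℝ => 1 - m)
      exact ((c1.add c2).sub (continuous_pow 2)).continuousOn
    · intro y hy
      rw [interior_Icc] at hy
      exact (hd y hy).differentiableAt.differentiableWithinAt
    · intro y hy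
      rw [interior_Icc] at hy
      rw [(hd y hy).deriv]
      have e1 := Real.le_log_one_add_of_nonneg hy.1.le
      have e2 := log_one_add_le_cubic (x := -y) (by linarith [hy.2])
      rw [← sub_eq_add_neg] at e2
      have e3 : y - y ^ 2 / 2 ≤ 2 * y / (y + 2) := by
        rw [le_div_iff₀ (by linarith [hy.1])]
        nlinarith [pow_pos hy.1 3]
      nlinarith [pow_pos hy.1 3]
  have := hm ⟨le_refl _, zero_le_one⟩ ⟨h0, h⟩ h0
  simp [Phi] at this
  simpa [Phi] using this

lemma le_Phi {m : ℝ} (h : |m| ≤ 1) : m ^ 2 ≤ Phi m := by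
  rcases le_total 0 m with h0 | h0
  · exact le_Phi_of_nonneg h0 (abs_le.1 h).2
  · have := le_Phi_of_nonneg (m := -m) (by linarith) (by linarith [(abs_le.1 h).1])
    have e : Phi (-m) = Phi m := by unfold Phi; rw [sub_neg_eq_add, ← sub_eq_add_neg, add_comm]
    rw [e] at this
    linarith [neg_sq m]

/-- Holds for `a = 0` as well, since `0 * log 0 = 0`. -/
lemma mul_log_mul {a b : ℝ} (hb : b ≠ 0) :
    (b * a) * Real.log (b * a) = b * (a * Real.log a) + b * a * Real.log b := by
  rcases eq_or_ne a 0 with rfl | ha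
  · simp
  · rw [Real.log_mul hb ha]; ring

/-- One step of the chain rule: masses `A`, `B` of the two values of the first bit. The left side is
`(A + B) D² / 4` and the right side `(A + B) Phi D / 4`, where `D = (A - B) / (A + B)`. -/
lemma two_point {A B : ℝ} (hA : 0 ≤ A) (hB : 0 ≤ B) :
    (A + B) / 4 - A * B / (A + B) ≤ 1 / 2 * (A * Real.log A + B * Real.log B
      - (A + B) * Real.log (A + B) + (A + B) * Real.log 2) := by
  rcases (add_nonneg hA hB).eq_or_lt with h | h
  · have h1 : A = 0 := by linarith
    have h2 : B = 0 := by linarith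
    simp [h1, h2]
  · set M := A + B with hM
    set D := (A - B) / M with hD
    have hDM : D * M = A - B := by rw [hD]; field_simp
    have hA' : A = M / 2 * (1 + D) := by linarith
    have hB' : B = M / 2 * (1 - D) := by linarith
    have hD1 : |D| ≤ 1 := by
      rw [hD, abs_div, abs_of_pos h, div_le_one h, abs_le]
      constructor <;> linarith
    have key := le_Phi hD1
    have hM2 : M / 2 ≠ 0 := by positivity
    have e : A * Real.log A + B * Real.log B = M / 2 * Phi D + M * Real.log (M / 2) := by
      rw [hA', hB', mul_log_mul hM2, mul_log_mul hM2, Phi]; ring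
    have e2 : M / 4 - A * B / M = M / 4 * D ^ 2 := by
      rw [hA', hB']; field_simp; ring
    rw [e, e2, Real.log_div h.ne' two_ne_zero]
    nlinarith

/-! ### Chain rule for the sequential mean squared error -/

lemma sum_cons {n : ℕ} (F : (Fin (n+1) → Bool) → ℝ) :
    ∑ x, F x = ∑ x, F (Fin.cons true x) + ∑ x, F (Fin.cons false x) := by
  rw [← (Fin.consEquiv (fun _ : Fin (n+1) => Bool)).sum_comp, Fintype.sum_prod_type]
  simp [Fin.consEquiv]

lemma condQ_zero {n : ℕ} (μ : (Fin (n+1) → Bool) → ℝ) (x : Fin (n+1) → Bool) :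
    condQ μ 0 x = (∑ y, μ (Fin.cons true y)) /
      (∑ y, μ (Fin.cons true y) + ∑ y, μ (Fin.cons false y)) := by
  unfold condQ
  rw [Finset.sum_filter, Finset.sum_filter, sum_cons, sum_cons]
  simp

lemma condQ_succ {n : ℕ} (μ : (Fin (n+1) → Bool) → ℝ) (k : Fin n) (b : Bool)
    (x : Fin n → Bool) :
    condQ μ k.succ (Fin.cons b x) = condQ (fun y => μ (Fin.cons b y)) k x := by
  unfold condQ
  simp only [Finset.sum_filter]
  rw [sum_cons, sum_cons]
  cases b <;> simp [Fin.forall_fin_succ]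

/-- Splitting on the first coordinate: the `k = 0` term depends only on the two half-masses, the other
terms are the SMSE of the two restrictions. -/
lemma smse_succ {n : ℕ} (μ : (Fin (n+1) → Bool) → ℝ) :
    smse μ = (∑ y, μ (Fin.cons true y)) * (∑ y, μ (Fin.cons false y)) /
      (∑ y, μ (Fin.cons true y) + ∑ y, μ (Fin.cons false y))
      + (smse (fun y => μ (Fin.cons true y)) + smse (fun y => μ (Fin.cons false y))) := by
  unfold smse
  rw [Fin.sum_univ_succ]
  congr 1
  · unfold smseTerm
    simp only [condQ_zero]
    rw [← Finset.sum_mul, sum_cons]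
    set A := ∑ y, μ (Fin.cons true y)
    set B := ∑ y, μ (Fin.cons false y)
    rcases eq_or_ne (A + B) 0 with h | h
    · simp [h]
    · field_simp
      ring
  · rw [← Finset.sum_add_distrib]
    refine Finset.sum_congr rfl fun k _ => ?_
    unfold smseTerm
    rw [sum_cons]
    simp only [condQ_succ]

/-- For a measure `μ` of mass `M`, the deficit of the SMSE from `n M / 4` is at most half the
(unnormalized) divergence of `μ` from the uniform law. -/
lemma smse_ge {n : ℕ} (μ : (Fin n → Bool) → ℝ) (hμ : ∀ x, 0 ≤ μ x) :
    (n : ℝ) / 4 * ∑ x, μ x - 1 / 2 * (∑ x, μ x * Real.log (μ x)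
      - (∑ x, μ x) * Real.log (∑ x, μ x) + n * (∑ x, μ x) * Real.log 2) ≤ smse μ := by
  induction n with
  | zero => simp [smse]
  | succ n ih =>
    have h1 := ih (fun y => μ (Fin.cons true y)) fun x => hμ _
    have h2 := ih (fun y => μ (Fin.cons false y)) fun x => hμ _
    have h3 := two_point (Finset.sum_nonneg fun y (_ : y ∈ Finset.univ) => hμ (Fin.cons true y))
      (Finset.sum_nonneg fun y (_ : y ∈ Finset.univ) => hμ (Fin.cons false y))
    rw [smse_succ, sum_cons μ, sum_cons fun x => μ x * Real.log (μ x)]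
    push_cast
    linarith

/-! ### Noise operator and hypercontractivity -/

/-- The sign in `{±1}` of a bit. -/
def sgn (b : Bool) : ℝ := if b then 1 else -1

/-- Expectation under the uniform law on `{0,1}^n`. -/
noncomputable def ex {n : ℕ} (f : (Fin n → Bool) → ℝ) : ℝ := ((2 : ℝ) ^ n)⁻¹ * ∑ x, f x

/-- The noise operator `T_ρ f (y) = E[f(X) | Y = y]`, where each bit of `X` is flipped with
probability `(1 - ρ) / 2`. -/
noncomputable def nz {n : ℕ} (ρ : ℝ) (f : (Fin n → Bool) → ℝ) (y : Fin n → Bool) : ℝ :=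
  ∑ x, f x * ∏ i, (if y i = x i then (1 + ρ) / 2 else (1 - ρ) / 2)

/-- The part of `f` that is even in the first bit: `f = avg f + sgn x₀ * dif f`. -/
noncomputable def avg {n : ℕ} (f : (Fin (n+1) → Bool) → ℝ) (x : Fin n → Bool) : ℝ :=
  (f (Fin.cons true x) + f (Fin.cons false x)) / 2

/-- The coefficient of `sgn x₀` in `f = avg f + sgn x₀ * dif f`. -/
noncomputable def dif {n : ℕ} (f : (Fin (n+1) → Bool) → ℝ) (x : Fin n → Bool) : ℝ :=
  (f (Fin.cons true x) - f (Fin.cons false x)) / 2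

/-- The Fourier weight of `f` at level one. -/
noncomputable def W1 {n : ℕ} (f : (Fin n → Bool) → ℝ) : ℝ :=
  ∑ i, (ex fun x => f x * sgn (x i)) ^ 2

lemma ex_succ {n : ℕ} (f : (Fin (n+1) → Bool) → ℝ) :
    ex f = ex fun x => (f (Fin.cons true x) + f (Fin.cons false x)) / 2 := by
  unfold ex
  rw [sum_cons, ← Finset.sum_div, Finset.sum_add_distrib, pow_succ]
  field_simp

lemma ex_zero (f : (Fin 0 → Bool) → ℝ) : ex f = f default := by
  simp only [ex, pow_zero, inv_one, one_mul, Fintype.sum_unique]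
  exact congrArg f (Subsingleton.elim _ _)

lemma ex_add {n : ℕ} (f g : (Fin n → Bool) → ℝ) : ex (fun x => f x + g x) = ex f + ex g := by
  simp [ex, Finset.sum_add_distrib, mul_add]

lemma ex_smul {n : ℕ} (c : ℝ) (f : (Fin n → Bool) → ℝ) : ex (fun x => c * f x) = c * ex f := by
  simp [ex, ← Finset.mul_sum]; ring

lemma ex_const {n : ℕ} (c : ℝ) : ex (fun _ : Fin n → Bool => c) = c := by
  simp [ex]

lemma ex_mono {n : ℕ} {f g : (Fin n → Bool) → ℝ} (h : ∀ x, f x ≤ g x) : ex f ≤ ex g :=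
  mul_le_mul_of_nonneg_left (Finset.sum_le_sum fun x _ => h x) (by positivity)

lemma ex_nonneg {n : ℕ} {f : (Fin n → Bool) → ℝ} (h : ∀ x, 0 ≤ f x) : 0 ≤ ex f :=
  mul_nonneg (by positivity) (Finset.sum_nonneg fun x _ => h x)

lemma ex_sq_mul_sq_le {n : ℕ} (u v : (Fin n → Bool) → ℝ) :
    (ex fun x => u x ^ 2 * v x ^ 2) ^ 2 ≤ (ex fun x => u x ^ 4) * ex fun x => v x ^ 4 := by
  have := Finset.sum_mul_sq_le_sq_mul_sq Finset.univ (fun x => u x ^ 2) (fun x => v x ^ 2)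
  simp only [← pow_mul] at this
  unfold ex
  calc _ = (((2 : ℝ) ^ n)⁻¹) ^ 2 * (∑ x, u x ^ 2 * v x ^ 2) ^ 2 := by ring
    _ ≤ (((2 : ℝ) ^ n)⁻¹) ^ 2 * ((∑ x, u x ^ 4) * ∑ x, v x ^ 4) :=
        mul_le_mul_of_nonneg_left this (by positivity)
    _ = _ := by ring

lemma nz_cons {n : ℕ} (ρ : ℝ) (f : (Fin (n+1) → Bool) → ℝ) (b : Bool) (y : Fin n → Bool) :
    nz ρ f (Fin.cons b y) = nz ρ (avg f) y + sgn b * ρ * nz ρ (dif f) y := by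
  unfold nz
  rw [sum_cons, Finset.mul_sum, ← Finset.sum_add_distrib, ← Finset.sum_add_distrib]
  refine Finset.sum_congr rfl fun x _ => ?_
  cases b <;> simp [Fin.prod_univ_succ, avg, dif, sgn] <;> ring

lemma nz_zero (ρ : ℝ) (f : (Fin 0 → Bool) → ℝ) (y : Fin 0 → Bool) :
    nz ρ f y = f default := by
  simp only [nz, Fintype.sum_unique, Finset.univ_eq_empty, Finset.prod_empty, mul_one]
  exact congrArg f (Subsingleton.elim _ _)

lemma nz_const {n : ℕ} (ρ c : ℝ) (y : Fin n → Bool) : nz ρ (fun _ => c) y = c := by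
  induction n with
  | zero => simp [nz_zero]
  | succ n ih =>
    rw [← Fin.cons_self_tail y, nz_cons]
    have h1 : avg (fun _ : Fin (n+1) → Bool => c) = fun _ => c := by ext; simp [avg]
    have h2 : dif (fun _ : Fin (n+1) → Bool => c) = fun _ => 0 := by ext; simp [dif]
    rw [h1, h2, ih]
    simp [nz]

lemma nz_mono {n : ℕ} {ρ : ℝ} (h0 : 0 ≤ ρ) (h1 : ρ ≤ 1) {f g : (Fin n → Bool) → ℝ}
    (h : ∀ x, f x ≤ g x) (y : Fin n → Bool) : nz ρ f y ≤ nz ρ g y := by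
  refine Finset.sum_le_sum fun x _ => mul_le_mul_of_nonneg_right (h x) ?_
  refine Finset.prod_nonneg fun i _ => ?_
  split_ifs <;> linarith

lemma abs_nz_le {n : ℕ} {ρ : ℝ} (h0 : 0 ≤ ρ) (h1 : ρ ≤ 1) {f : (Fin n → Bool) → ℝ}
    (h : ∀ x, |f x| ≤ 1) (y : Fin n → Bool) : |nz ρ f y| ≤ 1 := by
  rw [abs_le]
  constructor
  · rw [← nz_const ρ (-1) y]
    exact nz_mono h0 h1 (fun x => (abs_le.1 (h x)).1) y
  · conv_rhs => rw [← nz_const ρ 1 y]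
    exact nz_mono h0 h1 (fun x => (abs_le.1 (h x)).2) y

lemma ex_nz {n : ℕ} (ρ : ℝ) (f : (Fin n → Bool) → ℝ) : ex (nz ρ f) = ex f := by
  induction n with
  | zero => simp [ex_zero, nz_zero]
  | succ n ih =>
    rw [ex_succ, ex_succ f]
    simp only [nz_cons]
    rw [show (ex fun x => (f (Fin.cons true x) + f (Fin.cons false x)) / 2) = ex (avg f) from rfl,
      ← ih (avg f)]
    congr 1
    ext x
    simp [sgn]
    ring

lemma ex_sq_succ {n : ℕ} (f : (Fin (n+1) → Bool) → ℝ) :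
    (ex fun x => f x ^ 2) = (ex fun x => avg f x ^ 2) + ex fun x => dif f x ^ 2 := by
  rw [ex_succ, ← ex_add]
  congr 1
  ext x
  simp [avg, dif]
  ring

lemma ex_nz_sq_succ {n : ℕ} (ρ : ℝ) (f : (Fin (n+1) → Bool) → ℝ) :
    (ex fun y => nz ρ f y ^ 2) =
      (ex fun y => nz ρ (avg f) y ^ 2) + ρ ^ 2 * ex fun y => nz ρ (dif f) y ^ 2 := by
  rw [ex_succ, ← ex_smul, ← ex_add]
  congr 1
  ext x
  simp only [nz_cons, sgn]
  simp
  ring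

lemma ex_nz_four_succ {n : ℕ} (ρ : ℝ) (f : (Fin (n+1) → Bool) → ℝ) :
    (ex fun y => nz ρ f y ^ 4) =
      (ex fun y => nz ρ (avg f) y ^ 4) +
      (6 * ρ ^ 2) * (ex fun y => nz ρ (avg f) y ^ 2 * nz ρ (dif f) y ^ 2) +
      ρ ^ 4 * ex fun y => nz ρ (dif f) y ^ 4 := by
  rw [ex_succ, ← ex_smul, ← ex_smul, ← ex_add, ← ex_add]
  congr 1
  ext x
  simp only [nz_cons, sgn]
  simp
  ring

/-- Bonami's lemma `‖T_ρ f‖₄ ≤ ‖T_{2ρ} f‖₂`. The factor `√3` in place of `2` would be sharp; `2` suffices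
and avoids roots. -/
lemma hypercontractive {n : ℕ} (ρ : ℝ) (f : (Fin n → Bool) → ℝ) :
    (ex fun y => nz ρ f y ^ 4) ≤ (ex fun y => nz (2 * ρ) f y ^ 2) ^ 2 := by
  induction n with
  | zero => simp only [ex_zero, nz_zero]; apply le_of_eq; ring
  | succ n ih =>
    rw [ex_nz_four_succ, ex_nz_sq_succ]
    have ha := ih (avg f)
    have hb := ih (dif f)
    have hc := ex_sq_mul_sq_le (nz ρ (avg f)) (nz ρ (dif f))
    set a4 := ex fun y => nz ρ (avg f) y ^ 4
    set b4 := ex fun y => nz ρ (dif f) y ^ 4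
    set ab := ex fun y => nz ρ (avg f) y ^ 2 * nz ρ (dif f) y ^ 2
    have hA : 0 ≤ ex fun y => nz (2 * ρ) (avg f) y ^ 2 := ex_nonneg fun _ => sq_nonneg _
    have hB : 0 ≤ ex fun y => nz (2 * ρ) (dif f) y ^ 2 := ex_nonneg fun _ => sq_nonneg _
    set A := ex fun y => nz (2 * ρ) (avg f) y ^ 2
    set B := ex fun y => nz (2 * ρ) (dif f) y ^ 2
    have hb4 : 0 ≤ b4 := ex_nonneg fun _ => by positivity
    have h1 : ab ≤ A * B := by
      refine le_of_sq_le_sq ?_ (mul_nonneg hA hB)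
      calc ab ^ 2 ≤ a4 * b4 := hc
        _ ≤ A ^ 2 * B ^ 2 := mul_le_mul ha hb hb4 (by positivity)
        _ = (A * B) ^ 2 := by ring
    have h2 : 6 * ρ ^ 2 * ab ≤ 6 * ρ ^ 2 * (A * B) :=
      mul_le_mul_of_nonneg_left h1 (by positivity)
    have h3 : ρ ^ 4 * b4 ≤ ρ ^ 4 * B ^ 2 := mul_le_mul_of_nonneg_left hb (by positivity)
    have h4 : 0 ≤ ρ ^ 2 * (A * B) := by positivity
    have h5 : 0 ≤ ρ ^ 4 * B ^ 2 := by positivity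
    nlinarith

/-- `T_ρ` contracts the Fourier levels `≥ 1` by at least `ρ`. -/
lemma ex_nz_sq_le {n : ℕ} {ρ : ℝ} (h0 : 0 ≤ ρ) (h1 : ρ ≤ 1) (f : (Fin n → Bool) → ℝ) :
    (ex fun y => nz ρ f y ^ 2) ≤ ex f ^ 2 + ρ ^ 2 * ((ex fun x => f x ^ 2) - ex f ^ 2) := by
  induction n with
  | zero => simp only [ex_zero, nz_zero]; apply le_of_eq; ring
  | succ n ih =>
    rw [ex_nz_sq_succ, ex_sq_succ, ex_succ f,
      show (ex fun x => (f (Fin.cons true x) + f (Fin.cons false x)) / 2) = ex (avg f) from rfl]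
    have ha := ih (avg f)
    have hb := ih (dif f)
    have h2 : (ex fun y => nz ρ (dif f) y ^ 2) ≤ ex fun x => dif f x ^ 2 := by
      have hv : ex (dif f) ^ 2 ≤ ex fun x => dif f x ^ 2 := by
        have := ex_nonneg (f := fun x => (dif f x - ex (dif f)) ^ 2) fun _ => sq_nonneg _
        have e : (ex fun x => (dif f x - ex (dif f)) ^ 2) =
            (ex fun x => dif f x ^ 2) + ((-2 * ex (dif f)) * ex (dif f) + ex (dif f) ^ 2) := by
          rw [← ex_smul]
          conv_rhs => rw [← ex_const (n := n) (ex (dif f) ^ 2)]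
          rw [← ex_add, ← ex_add]
          congr 1
          ext x
          ring
        linarith
      have : ρ ^ 2 ≤ 1 := by nlinarith
      nlinarith
    nlinarith [mul_le_mul_of_nonneg_left h2 (sq_nonneg ρ)]

lemma W1_succ {n : ℕ} (f : (Fin (n+1) → Bool) → ℝ) :
    W1 f = ex (dif f) ^ 2 + W1 (avg f) := by
  unfold W1
  rw [Fin.sum_univ_succ]
  congr 1
  · rw [ex_succ]
    congr 2
    ext x
    simp [sgn, dif]
    ring
  · refine Finset.sum_congr rfl fun i _ => ?_
    rw [ex_succ]
    congr 2
    ext x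
    simp [avg]
    ring

/-- Separating level one: `T_ρ` contracts the Fourier levels `≥ 2` by at least `ρ²`. -/
lemma ex_nz_sq_le_W1 {n : ℕ} {ρ : ℝ} (h0 : 0 ≤ ρ) (h1 : ρ ≤ 1) (f : (Fin n → Bool) → ℝ) :
    (ex fun y => nz ρ f y ^ 2) ≤ ex f ^ 2 + ρ ^ 2 * W1 f
      + ρ ^ 4 * ((ex fun x => f x ^ 2) - ex f ^ 2 - W1 f) := by
  induction n with
  | zero => simp only [ex_zero, nz_zero, W1]; apply le_of_eq; simp
  | succ n ih =>
    rw [ex_nz_sq_succ, ex_sq_succ, W1_succ, ex_succ f,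
      show (ex fun x => (f (Fin.cons true x) + f (Fin.cons false x)) / 2) = ex (avg f) from rfl]
    have ha := ih (avg f)
    have hb := ex_nz_sq_le h0 h1 (dif f)
    nlinarith [mul_le_mul_of_nonneg_left hb (sq_nonneg ρ)]

/-! ### Majority -/

lemma hw_not {n : ℕ} (x : Fin n → Bool) : hw (fun i => !x i) + hw x = n := by
  have := Finset.card_filter_add_card_filter_not (s := (Finset.univ : Finset (Fin n)))
    (fun i => x i = true)
  simp only [Finset.card_univ, Fintype.card_fin, Bool.not_eq_true] at this
  simp only [hw, Bool.not_eq_true']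
  omega

lemma ex_maj {n : ℕ} (hn : Odd n) : ex (fun x => sgn (majF n x)) = 0 := by
  have h : ∑ x : Fin n → Bool, sgn (majF n x) = ∑ x : Fin n → Bool, -sgn (majF n x) := by
    have hinv : Function.Involutive fun (x : Fin n → Bool) i => !x i := fun x => by simp
    rw [← Equiv.sum_comp (hinv.toPerm _)]
    refine Finset.sum_congr rfl fun x _ => ?_
    have e := hw_not x
    obtain ⟨k, hk⟩ := hn
    have e1 : majF n (fun i => !x i) = !majF n x := by
      unfold majF
      rw [← decide_not, decide_eq_decide]
      omega
    change sgn (majF n fun i => !x i) = _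
    rw [e1]
    cases majF n x <;> simp [sgn]
  rw [Finset.sum_neg_distrib] at h
  have : ∑ x : Fin n → Bool, sgn (majF n x) = 0 := by linarith
  simp [ex, this]

lemma hw_insertNth {n : ℕ} (i : Fin (n+1)) (b : Bool) (z : Fin n → Bool) :
    hw (i.insertNth b z : Fin (n+1) → Bool) = b.toNat + hw z := by
  unfold hw
  rw [Finset.card_filter, Finset.card_filter, Fin.sum_univ_succAbove _ i]
  simp
  cases b <;> rfl

lemma card_hw {n : ℕ} (k : ℕ) :
    (Finset.univ.filter fun z : Fin n → Bool => hw z = k).card = n.choose k := by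
  have : n.choose k = (Finset.powersetCard k (Finset.univ : Finset (Fin n))).card := by simp
  rw [this]
  refine Finset.card_nbij' (fun z => Finset.univ.filter fun i => z i = true)
    (fun s i => decide (i ∈ s)) ?_ ?_ ?_ ?_
  · intro z hz
    have := (Finset.mem_filter.1 hz).2
    exact Finset.mem_powersetCard.2 ⟨Finset.subset_univ _, this⟩
  · intro s hs
    have := (Finset.mem_powersetCard.1 hs).2
    exact Finset.mem_filter.2 ⟨Finset.mem_univ _, by simpa [hw] using this⟩
  · intro z _
    ext i
    simp
  · intro s _
    ext i
    simp

/-- Fixing all bits but the `i`-th, the value of majority depends on bit `i` exactly when the other `2j`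
bits are balanced. -/
lemma coeff_maj (j : ℕ) (i : Fin (2 * j + 1)) :
    (ex fun x => sgn (majF (2 * j + 1) x) * sgn (x i)) = (2 * j).choose j / 2 ^ (2 * j) := by
  have h : ∑ x : Fin (2 * j + 1) → Bool, sgn (majF (2 * j + 1) x) * sgn (x i)
      = 2 * (2 * j).choose j := by
    rw [← (Fin.insertNthEquiv (fun _ => Bool) i).sum_comp, Fintype.sum_prod_type,
      Fintype.sum_bool, ← Finset.sum_add_distrib, ← card_hw, Finset.card_filter, Nat.cast_sum,
      Finset.mul_sum]
    refine Finset.sum_congr rfl fun z _ => ?_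
    change sgn (majF _ (i.insertNth true z : Fin (2 * j + 1) → Bool)) *
        sgn ((i.insertNth true z : Fin (2 * j + 1) → Bool) i) +
      sgn (majF _ (i.insertNth false z : Fin (2 * j + 1) → Bool)) *
        sgn ((i.insertNth false z : Fin (2 * j + 1) → Bool) i) = _
    simp only [majF, hw_insertNth, Fin.insertNth_apply_same, sgn, Bool.toNat_true,
      Bool.toNat_false, zero_add]
    rcases lt_trichotomy (hw z) j with h | h | h
    · have a1 : ¬ (2 * j + 1 < 2 * (1 + hw z)) := by omega
      have a2 : ¬ (2 * j + 1 < 2 * hw z) := by omega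
      simp [a1, a2, h.ne]
    · have a1 : (2 * j + 1 < 2 * (1 + hw z)) := by omega
      have a2 : ¬ (2 * j + 1 < 2 * hw z) := by omega
      rw [if_pos h]
      simp [a1, a2]
      norm_num
    · have a1 : (2 * j + 1 < 2 * (1 + hw z)) := by omega
      have a2 : (2 * j + 1 < 2 * hw z) := by omega
      simp [a1, a2, h.ne']
  unfold ex
  rw [h, pow_succ]
  field_simp

lemma W1_maj (j : ℕ) : W1 (fun x => sgn (majF (2 * j + 1) x)) = (Real.Wallis.W j)⁻¹ := by
  simp only [W1, coeff_maj, Finset.sum_const, Finset.card_univ, Fintype.card_fin, nsmul_eq_mul]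
  rw [Real.Wallis.W_eq_factorial_ratio, Nat.cast_choose ℝ (by omega : j ≤ 2 * j),
    show 2 * j - j = j by omega]
  push_cast
  have : (2 : ℝ) ^ (4 * j) = (2 ^ (2 * j)) ^ 2 := by rw [← pow_mul]; ring_nf
  rw [this]
  field_simp

lemma W1_maj_le (j : ℕ) : W1 (fun x => sgn (majF (2 * j + 1) x)) ≤
    2 / Real.pi + 1 / (2 * j + 1) := by
  rw [W1_maj]
  have h := Real.Wallis.le_W j
  have hp := Real.pi_gt_three
  have hpos : 0 < ((2 : ℝ) * j + 1) / (2 * j + 2) * (Real.pi / 2) := by positivity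
  calc _ ≤ (((2 : ℝ) * j + 1) / (2 * j + 2) * (Real.pi / 2))⁻¹ := inv_anti₀ hpos h
    _ = 2 / Real.pi + 2 / Real.pi * (1 / (2 * j + 1)) := by field_simp; ring
    _ ≤ 2 / Real.pi + 1 * (1 / (2 * j + 1)) := by
        gcongr
        rw [div_le_one (by positivity)]
        linarith
    _ = _ := by ring

/-! ### Mutual-information bound and conclusion -/

lemma noisyPMF_eq {n : ℕ} (α : ℝ) (b : (Fin n → Bool) → Bool) (c : Bool) (y : Fin n → Bool) :
    noisyPMF n α b c y =
      ((2 : ℝ) ^ (n + 1))⁻¹ * (1 + sgn c * nz (1 - 2 * α) (fun x => sgn (b x)) y) := by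
  trans ((2 : ℝ) ^ (n + 1))⁻¹ *
    (nz (1 - 2 * α) (fun _ => 1) y + sgn c * nz (1 - 2 * α) (fun x => sgn (b x)) y)
  swap
  · rw [nz_const]
  unfold noisyPMF nz
  rw [Finset.mul_sum, ← Finset.sum_add_distrib, Finset.mul_sum]
  refine Finset.sum_congr rfl fun x _ => ?_
  rw [show (1 + (1 - 2 * α)) / 2 = 1 - α by ring, show (1 - (1 - 2 * α)) / 2 = α by ring, pow_succ]
  rcases hbx : b x <;> cases c <;> simp [sgn, hbx] <;> ring

/-- The mutual-information bound: summing `smse_ge` over the two values of `b`, which are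
equiprobable, the deficit is at most `E[Phi(T f)] / 4` with `f = sgn ∘ b`. -/
lemma noisySMSE_ge {n : ℕ} {α : ℝ} (h0 : 0 ≤ α) (h1 : α ≤ 1 / 2) (b : (Fin n → Bool) → Bool)
    (hb : ex (fun x => sgn (b x)) = 0) :
    (n : ℝ) / 4 - 1 / 4 * (ex fun y => Phi (nz (1 - 2 * α) (fun x => sgn (b x)) y))
      ≤ noisySMSE n α b := by
  set m := nz (1 - 2 * α) (fun x => sgn (b x)) with hm
  have hm1 : ∀ y, |m y| ≤ 1 := abs_nz_le (by linarith) (by linarith) fun x => by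
    cases b x <;> simp [sgn]
  have hsum : ∑ y, m y = 0 := by
    have := ex_nz (1 - 2 * α) fun x => sgn (b x)
    rw [hb] at this
    simpa [ex, hm] using this
  set K : ℝ := ((2 : ℝ) ^ (n + 1))⁻¹ with hK
  have hK0 : K ≠ 0 := by positivity
  have hp : ∀ c, noisyPMF n α b c = fun y => K * (1 + sgn c * m y) :=
    fun c => funext fun y => noisyPMF_eq α b c y
  have hmass : ∀ c, ∑ y, noisyPMF n α b c y = 1 / 2 := by
    intro c
    rw [hp, ← Finset.mul_sum, Finset.sum_add_distrib, ← Finset.mul_sum, hsum]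
    simp [hK, pow_succ]
  have hnn : ∀ c y, 0 ≤ noisyPMF n α b c y := by
    intro c y
    rw [hp]
    have := abs_le.1 (hm1 y)
    refine mul_nonneg (by positivity) ?_
    cases c <;> simp [sgn] <;> linarith
  have h := fun c => smse_ge (noisyPMF n α b c) (hnn c)
  have hent : ∑ c : Bool, ∑ y, noisyPMF n α b c y * Real.log (noisyPMF n α b c y)
      = 1 / 2 * (ex fun y => Phi (m y)) - (n + 1) * Real.log 2 := by
    rw [Fintype.sum_bool, ← Finset.sum_add_distrib]
    have e : ∀ y, noisyPMF n α b true y * Real.log (noisyPMF n α b true y) +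
        noisyPMF n α b false y * Real.log (noisyPMF n α b false y) =
        K * Phi (m y) + 2 * K * Real.log K := by
      intro y
      simp only [hp]
      rw [mul_log_mul hK0, mul_log_mul hK0]
      simp [sgn, Phi]
      ring_nf
    rw [Finset.sum_congr rfl fun y _ => e y, Finset.sum_add_distrib, ← Finset.mul_sum]
    simp only [Finset.sum_const, Finset.card_univ, Fintype.card_fun, Fintype.card_bool,
      Fintype.card_fin, nsmul_eq_mul, ex]
    have hlog : Real.log K = -((n + 1) * Real.log 2) := by
      rw [hK, Real.log_inv, Real.log_pow]; push_cast; ring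
    rw [hlog, hK, pow_succ]
    push_cast
    field_simp
    ring
  have ht := h true
  have hf := h false
  simp only [hmass] at ht hf
  rw [Fintype.sum_bool] at hent
  unfold noisySMSE
  rw [Fintype.sum_bool]
  have hl : Real.log (1 / 2 : ℝ) = -Real.log 2 := by rw [one_div, Real.log_inv]
  rw [hl] at ht hf
  linarith

/-- Uses `Phi m ≤ m² + 2m⁴/3`; the second moment of `T_ρ f` is handled by level-one separation, the
fourth by hypercontractivity. -/
lemma ex_Phi_le {n : ℕ} {ρ : ℝ} (h0 : 0 ≤ ρ) (h1 : 2 * ρ ≤ 1) (b : (Fin n → Bool) → Bool)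
    (hb : ex (fun x => sgn (b x)) = 0) :
    (ex fun y => Phi (nz ρ (fun x => sgn (b x)) y)) ≤
      ρ ^ 2 * W1 (fun x => sgn (b x)) + 12 * ρ ^ 4 := by
  set f : (Fin n → Bool) → ℝ := fun x => sgn (b x) with hf
  have hsq : (ex fun x => f x ^ 2) = 1 := by
    have : (fun x => f x ^ 2) = fun _ => 1 := by
      ext x
      simp only [hf]
      cases b x <;> simp [sgn]
    rw [this, ex_const]
  have hm1 : ∀ y, |nz ρ f y| ≤ 1 := abs_nz_le h0 (by linarith) fun x => by
    simp only [hf]; cases b x <;> simp [sgn]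
  have h2 := ex_nz_sq_le_W1 h0 (by linarith) f
  have h4 := hypercontractive ρ f
  have h5 := ex_nz_sq_le (by linarith : 0 ≤ 2 * ρ) h1 f
  rw [hb, hsq] at h5 h2
  have hW : 0 ≤ W1 f := Finset.sum_nonneg fun _ _ => sq_nonneg _
  have h6 : (ex fun y => nz (2 * ρ) f y ^ 2) ^ 2 ≤ (4 * ρ ^ 2) ^ 2 :=
    pow_le_pow_left₀ (ex_nonneg fun _ => sq_nonneg _) (by linarith) 2
  have hmain : (ex fun y => Phi (nz ρ f y)) ≤
      (ex fun y => nz ρ f y ^ 2) + 2 / 3 * ex fun y => nz ρ f y ^ 4 := by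
    rw [← ex_smul, ← ex_add]
    exact ex_mono fun y => Phi_le (hm1 y)
  have h7 : 0 ≤ ρ ^ 4 * W1 f := by positivity
  have h8 : 0 ≤ ρ ^ 4 := by positivity
  nlinarith

theorem stmt5 : ∃ c : ℝ, 0 < c ∧ ∃ α₀ : ℝ, 0 < α₀ ∧ α₀ < 1/2 ∧
    ∀ α : ℝ, α₀ < α → α < 1/2 →
    ∀ ε : ℝ, 0 < ε → ∃ N : ℕ, ∀ n : ℕ, N ≤ n → Odd n →
      noisySMSE n α (majF n) - (n : ℝ)/4 ≥
        -(1 - 2*α)^2 / (8 * Real.pi * α * (1-α)) - c * (1 - 2*α)^4 - ε := by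
  refine ⟨3, by norm_num, 1 / 4, by norm_num, by norm_num, fun α hα1 hα2 ε hε => ?_⟩
  obtain ⟨N, hN⟩ := exists_nat_gt (1 / ε)
  refine ⟨N, fun n hn hodd => ?_⟩
  have hmaj := ex_maj hodd
  have h1 := noisySMSE_ge (by linarith) hα2.le (majF n) hmaj
  have h2 := ex_Phi_le (ρ := 1 - 2 * α) (by linarith) (by linarith) (majF n) hmaj
  have hW : W1 (fun x => sgn (majF n x)) ≤ 2 / Real.pi + 1 / n := by
    obtain ⟨j, rfl⟩ := hodd
    exact_mod_cast W1_maj_le j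
  have hNn : (N : ℝ) ≤ n := by exact_mod_cast hn
  have hnε : 1 / (n : ℝ) ≤ ε := by
    have : 1 / ε < n := by linarith
    exact (one_div_le (by linarith [one_div_pos.2 hε]) hε).2 this.le
  set ρ := 1 - 2 * α with hρ
  have hρ0 : 0 ≤ ρ ^ 2 := sq_nonneg _
  have hρ1 : ρ ^ 2 ≤ 1 := by nlinarith
  -- `4α(1-α) = 1 - ρ² ≤ 1`, so the target main term dominates `ρ² / (2π)`
  have hmainterm : ρ ^ 2 * (2 / Real.pi) / 4 ≤ ρ ^ 2 / (8 * Real.pi * α * (1 - α)) := by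
    have hp := Real.pi_pos
    have ha : 0 < α * (1 - α) := mul_pos (by linarith) (by linarith)
    have e : ρ ^ 2 * (2 / Real.pi) / 4 = ρ ^ 2 / (2 * Real.pi) := by field_simp; norm_num
    rw [e]
    apply div_le_div_of_nonneg_left hρ0
    · nlinarith [mul_pos hp ha]
    · nlinarith [mul_nonneg hp.le (sq_nonneg (1 - 2 * α))]
  have h3 := mul_le_mul_of_nonneg_left (hW.trans (add_le_add_right hnε _)) hρ0
  have h4 : ρ ^ 2 * ε ≤ 1 * ε := mul_le_mul_of_nonneg_right hρ1 hε.le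
  rw [neg_div]
  linarith
end

section
/- Dictator asymptotically outperforms majority at strong noise: there exists ᾱ ∈ (0,1/2) such that for every α ∈ (ᾱ, 1/2), liminf over odd n → ∞ of [M(Y^n | maj(X^n)) − M(Y^n | dic(X^n))] > 0. -/
/-!
Write `ρ = 1 - 2 * α`. For any pmf `μ`, `Q (1 - Q) = 1/4 - (Q - 1/2)²`, so the SMSE equals `n / 4`
minus the sum over `k` of the squared biases of the predictions. For the dictator the only biased
prediction is that of the first bit, which gives exactly `n / 4 - ρ² / 4` (only `≤` is needed,
`dictator_upper`). For majority it therefore suffices to show that the total squared bias is at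
most `0.9 * ρ² / 4` when `ρ ≤ 1 / 1000` and `n ≥ 3` (`maj_lower`).

The function `(v, u) ↦ v² / u` is jointly convex, and this is used twice. First, revealing to the
predictor of bit `k` *all* other bits of `Y`, not only the previous ones, can only increase the
squared bias (`smseTerm_lower`); every `k` then plays the same role. Secondly, the channel keeps
each bit with probability `ρ` and replaces it by a fresh fair bit otherwise. Revealing the set `A`
of kept bits among those other than `k` increases the squared bias further
(`weighted_sq_div_le`, `chi_sum_le`), while the factor `ρ²` from the bit `k` itself is retained.

Once `A` and the bits of `y` on `A` are known, the majority is determined by a shifted sum of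
`m = n - 1 - |A|` fair bits and by the bit `k`. If `t` is the probability of a tie among the bits
other than `k`, and `g` the conditional mean of the `±1`-valued majority, the squared bias is
`ρ² * t² / (1 - g²)`. As `t² / (1 - g²) ≤ t² + (t / (1 - |g|))² * g²`, it is enough to bound three
things: `t² ≤ (3/4) / (m + 1)` for `m ≥ 1` (`choose_sq_bound`), the hazard rate `t / (1 - |g|)` of
the binomial distribution (`hazard`), and `|g| ≤ |s| * max t`, where `s` is the sum of the `±1`
signs of `y` on `A`. This gives `t² / (1 - g²) ≤ (3/4) / (m + 1) + 42 * s² / ((m + 1) * (m + 2))`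
for `m ≥ 1` (`core_bound'`). Finally `s²` has mean `|A|`, and `1 / (m + 1)` and
`|A| / ((m + 1) * (m + 2))` have binomial means at most `1 / (n * (1 - ρ))` and
`ρ / (n * (1 - ρ)²)`, so that `n` times the total is at most `3/4 + O(ρ) < 9/10` (`binom_avg_le`).
-/


open Finset MeasureTheory

/-- The point `y` with its `k`-th bit flipped. -/
def flipAt {n : ℕ} (k : Fin n) (y : Fin n → Bool) : Fin n → Bool :=
  Function.update y k (!y k)

lemma flipAt_flipAt {n : ℕ} (k : Fin n) (y : Fin n → Bool) : flipAt k (flipAt k y) = y := by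
  simp [flipAt]

lemma sum_flipAt {n : ℕ} (k : Fin n) (f : (Fin n → Bool) → ℝ) :
    ∑ y, f (flipAt k y) = ∑ y, f y :=
  Equiv.sum_comp ⟨flipAt k, flipAt k, flipAt_flipAt k, flipAt_flipAt k⟩ f

lemma sgn_not (b : Bool) : sgn (!b) = -sgn b := by cases b <;> simp [sgn]

lemma sgn_mul_self (b : Bool) : sgn b * sgn b = 1 := by cases b <;> simp [sgn]

/-- The squared bias of the prediction of bit `k` from the previous bits is at most the squared bias
of its prediction from all other bits; the latter is a `χ²`-type sum of `μ` against its flip. -/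
lemma smseTerm_lower {n : ℕ} (μ : (Fin n → Bool) → ℝ) (hμ : ∀ y, 0 ≤ μ y) (k : Fin n) :
    1 / 4 * ∑ y, μ y -
      1 / 8 * ∑ y, (μ y - μ (flipAt k y)) ^ 2 / (μ y + μ (flipAt k y)) ≤ smseTerm μ k := by
  -- `P y z`: `y` and `z` have the same prefix; `D` is its mass, `E` its signed mass
  set P : (Fin n → Bool) → (Fin n → Bool) → Prop := fun y z => ∀ i, i < k → z i = y i with hP
  set D : (Fin n → Bool) → ℝ := fun y => ∑ z, if P y z then μ z else 0 with hD
  set E : (Fin n → Bool) → ℝ := fun y => ∑ z, if P y z then sgn (z k) * μ z else 0 with hE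
  have hPsymm : ∀ y z, P y z ↔ P z y := fun y z =>
    ⟨fun h i hi => (h i hi).symm, fun h i hi => (h i hi).symm⟩
  have hPcongr : ∀ y z, P y z → P y = P z := by
    intro y z h
    funext w
    apply propext
    constructor
    · intro h' i hi; rw [h' i hi, h i hi]
    · intro h' i hi; rw [h' i hi, h i hi]
  have hDc : ∀ y z, P y z → D y = D z := by
    intro y z h; simp only [hD, hPcongr y z h]
  have hEc : ∀ y z, P y z → E y = E z := by
    intro y z h; simp only [hE, hPcongr y z h]
  have hPflip : ∀ y, P y (flipAt k y) := by
    intro y i hi; simp [flipAt, Function.update_of_ne hi.ne]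
  have hDμ : ∀ y, μ y ≤ D y := by
    intro y
    have := Finset.single_le_sum (f := fun z => if P y z then μ z else 0) (s := univ)
      (fun z _ => by split_ifs <;> simp [hμ]) (mem_univ y)
    have hyy : P y y := fun i _ => rfl
    simpa [hyy] using this
  set L : (Fin n → Bool) → ℝ := fun y => E y / D y with hL
  have hLc : ∀ y z, P y z → L y = L z := by
    intro y z h; simp only [hL, hDc y z h, hEc y z h]
  -- `L y` is the conditional expectation of `sgn (y k)` given the prefix of `y`
  have hQ : ∀ y, μ y * (condQ μ k y * (1 - condQ μ k y)) = 1 / 4 * (μ y - μ y * L y ^ 2) := by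
    intro y
    rcases (hμ y).eq_or_lt with h0 | h0
    · simp [← h0]
    have hDpos : 0 < D y := h0.trans_le (hDμ y)
    have hq : condQ μ k y = (1 + L y) / 2 := by
      have hden : (∑ z ∈ Finset.univ.filter
          (fun z : Fin n → Bool => ∀ i : Fin n, i < k → z i = y i), μ z) = D y := by
        rw [Finset.sum_filter]
      have hnum : (∑ z ∈ Finset.univ.filter
          (fun z : Fin n → Bool => (∀ i : Fin n, i < k → z i = y i) ∧ z k = true), μ z)
          = (D y + E y) / 2 := by
        rw [Finset.sum_filter, hD, hE]
        simp only
        rw [← Finset.sum_add_distrib, Finset.sum_div]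
        refine Finset.sum_congr rfl fun z _ => ?_
        by_cases hz : P y z
        · have hz' : ∀ i, i < k → z i = y i := hz
          rw [if_pos hz, if_pos hz]
          cases hzk : z k
          · rw [if_neg (by simp)]; simp [sgn]
          · rw [if_pos ⟨hz', rfl⟩]; simp [sgn]
        · have hz' : ¬ ∀ i, i < k → z i = y i := hz
          simp [hz, hz']
      rw [condQ, hden, hnum, hL]
      field_simp
    rw [hq]; ring
  -- tower property: `L` depends on the prefix only
  have H1 : ∑ y, μ y * L y ^ 2 = ∑ y, sgn (y k) * μ y * L y := by
    calc ∑ y, μ y * L y ^ 2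
        = ∑ y, ∑ z, if P y z then (μ y * L y / D y) * (sgn (z k) * μ z) else 0 := by
          refine Finset.sum_congr rfl fun y _ => ?_
          have : μ y * L y ^ 2 = (μ y * L y / D y) * E y := by simp only [hL]; ring
          rw [this, hE, Finset.mul_sum]
          refine Finset.sum_congr rfl fun z _ => ?_
          split_ifs <;> simp
      _ = ∑ z, ∑ y, if P y z then (μ y * L y / D y) * (sgn (z k) * μ z) else 0 :=
          Finset.sum_comm
      _ = ∑ z, (sgn (z k) * μ z * L z / D z) * D z := by
          refine Finset.sum_congr rfl fun z _ => ?_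
          have hDz : D z = ∑ y, if P z y then μ y else 0 := rfl
          rw [hDz, Finset.mul_sum, ← hDz]
          refine Finset.sum_congr rfl fun y _ => ?_
          by_cases h : P y z
          · have h' := (hPsymm y z).1 h
            rw [if_pos h, if_pos h', hLc y z h, hDc y z h]; ring
          · have h' : ¬ P z y := fun h' => h ((hPsymm y z).2 h')
            rw [if_neg h, if_neg h', mul_zero]
      _ = ∑ y, sgn (y k) * μ y * L y := by
          refine Finset.sum_congr rfl fun z _ => ?_
          by_cases h : D z = 0
          · simp [hL, h]
          · field_simp
  have hflip : ∀ y, L (flipAt k y) = L y := fun y => (hLc _ _ (hPflip y)).symm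
  have hsf : ∀ y : Fin n → Bool, sgn (flipAt k y k) = - sgn (y k) := by
    intro y; simp [flipAt, sgn_not]
  have H2 : ∑ y, sgn (y k) * μ y * L y = - ∑ y, sgn (y k) * μ (flipAt k y) * L y := by
    rw [← sum_flipAt k, ← Finset.sum_neg_distrib]
    refine Finset.sum_congr rfl fun y _ => ?_
    rw [hflip, hsf]; ring
  have H3 : ∑ y, μ y * L y ^ 2 = ∑ y, μ (flipAt k y) * L y ^ 2 := by
    rw [← sum_flipAt k]
    refine Finset.sum_congr rfl fun y _ => ?_
    rw [hflip]
  -- pointwise, `2 * v * x - x ^ 2 * u ≤ v ^ 2 / u`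
  have H4 : ∑ y, (L y * sgn (y k) * (μ y - μ (flipAt k y))
        - L y ^ 2 / 2 * (μ y + μ (flipAt k y)))
      ≤ ∑ y, 1 / 2 * ((μ y - μ (flipAt k y)) ^ 2 / (μ y + μ (flipAt k y))) := by
    refine Finset.sum_le_sum fun y _ => ?_
    have h1 := hμ y
    have h2 := hμ (flipAt k y)
    rcases (add_nonneg h1 h2).eq_or_lt with h0 | h0
    · have e1 : μ y = 0 := by linarith
      have e2 : μ (flipAt k y) = 0 := by linarith
      simp [e1, e2]
    · set S := μ y + μ (flipAt k y)
      set d := μ y - μ (flipAt k y)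
      have hs := sgn_mul_self (y k)
      have : 1 / 2 * (d ^ 2 / S) - (L y * sgn (y k) * d - L y ^ 2 / 2 * S)
          = (d - L y * sgn (y k) * S) ^ 2 / (2 * S) := by
        field_simp
        linear_combination (- L y ^ 2 * S ^ 2) * hs
      have h3 : 0 ≤ (d - L y * sgn (y k) * S) ^ 2 / (2 * S) := by positivity
      linarith
  have H5 : ∑ y, (L y * sgn (y k) * (μ y - μ (flipAt k y))
        - L y ^ 2 / 2 * (μ y + μ (flipAt k y))) = ∑ y, μ y * L y ^ 2 := by
    have : ∑ y, (L y * sgn (y k) * (μ y - μ (flipAt k y))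
        - L y ^ 2 / 2 * (μ y + μ (flipAt k y)))
        = ∑ y, sgn (y k) * μ y * L y - ∑ y, sgn (y k) * μ (flipAt k y) * L y
          - 1 / 2 * (∑ y, μ y * L y ^ 2) - 1 / 2 * (∑ y, μ (flipAt k y) * L y ^ 2) := by
      rw [Finset.mul_sum, Finset.mul_sum, ← Finset.sum_sub_distrib, ← Finset.sum_sub_distrib,
        ← Finset.sum_sub_distrib]
      refine Finset.sum_congr rfl fun y _ => ?_
      ring
    rw [this]; linarith
  rw [smseTerm, Finset.sum_congr rfl fun y _ => hQ y, ← Finset.mul_sum, Finset.sum_sub_distrib]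
  rw [H5, ← Finset.mul_sum] at H4
  linarith

/-! ### Binomial tails -/

lemma centralBinom_bound (q : ℕ) (hq : 1 ≤ q) :
    4 * (2 * (q : ℝ) + 1) * (q.centralBinom : ℝ) ^ 2 ≤ 3 * 16 ^ q := by
  induction q, hq using Nat.le_induction with
  | base => norm_num [Nat.centralBinom, Nat.choose]
  | succ q hq ih =>
    have h : ((q : ℝ) + 1) * ((q + 1).centralBinom : ℝ) = 2 * (2 * q + 1) * q.centralBinom := by
      exact_mod_cast Nat.succ_mul_centralBinom_succ q
    have hq0 : (0 : ℝ) < (q : ℝ) + 1 := by positivity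
    have e : ((q + 1).centralBinom : ℝ) = 2 * (2 * q + 1) * q.centralBinom / (q + 1) := by
      field_simp; linarith
    rw [e]
    push_cast
    rw [div_pow, pow_succ (16 : ℝ)]
    have key : 4 * (2 * ((q : ℝ) + 1) + 1) * ((2 * (2 * q + 1) * q.centralBinom) ^ 2 / (q + 1) ^ 2)
        = (4 * (2 * (q : ℝ) + 1) * (q.centralBinom : ℝ) ^ 2) *
          (4 * (2 * q + 3) * (2 * q + 1) / (q + 1) ^ 2) := by
      field_simp; ring
    have h2 : 4 * (2 * (q : ℝ) + 3) * (2 * q + 1) / (q + 1) ^ 2 ≤ 16 := by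
      rw [div_le_iff₀ (by positivity)]; nlinarith
    rw [key]
    calc _ ≤ (3 * 16 ^ q) * (16 : ℝ) := by gcongr
      _ = _ := by ring

/-- The square of a binomial point probability is at most `(3/4) / (m + 1)`. The constant must be
below `1`, since it becomes the leading constant of the majority bound. -/
lemma choose_sq_bound (m i : ℕ) (hm : 1 ≤ m) :
    4 * ((m : ℝ) + 1) * (m.choose i : ℝ) ^ 2 ≤ 3 * ((2 : ℝ) ^ m) ^ 2 := by
  have h1 : (m.choose i : ℝ) ≤ (m.choose (m / 2) : ℝ) := by
    exact_mod_cast Nat.choose_le_middle i m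
  have h2 : 4 * ((m : ℝ) + 1) * (m.choose i : ℝ) ^ 2
      ≤ 4 * ((m : ℝ) + 1) * (m.choose (m / 2) : ℝ) ^ 2 := by gcongr
  refine h2.trans ?_
  rcases Nat.even_or_odd' m with ⟨q, rfl | rfl⟩
  · have := centralBinom_bound q (by omega)
    have e : 2 * q / 2 = q := by omega
    rw [Nat.centralBinom] at this
    rw [e, ← pow_mul, mul_comm _ 2, ← mul_assoc, pow_mul]
    norm_num
    exact this
  · have := centralBinom_bound (q + 1) (by omega)
    have e : (2 * q + 1) / 2 = q := by omega
    have e2 : ((q + 1).centralBinom : ℝ) = 2 * ((2 * q + 1).choose q : ℝ) := by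
      have : (q + 1).centralBinom = 2 * (2 * q + 1).choose q := by
        rw [Nat.centralBinom, show 2 * (q + 1) = (2 * q + 1) + 1 by ring, Nat.choose_succ_succ,
          Nat.choose_symm_half]
        ring
      rw [this]; push_cast; ring
    rw [e2] at this
    rw [e, show ((2 : ℝ) ^ (2 * q + 1)) ^ 2 = 4 * 16 ^ q by
      rw [← pow_mul, show (2 * q + 1) * 2 = 4 * q + 2 by ring, pow_add, pow_mul]; norm_num
      ring]
    rw [pow_succ (16 : ℝ)] at this
    push_cast at this ⊢
    have hc : 0 ≤ ((2 * q + 1).choose q : ℝ) ^ 2 := by positivity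
    nlinarith

lemma sub_mul_choose (m j : ℕ) : ((j : ℝ) + 1) * (m.choose (j + 1) : ℝ)
    = ((m : ℝ) - j) * (m.choose j : ℝ) := by
  rcases le_or_gt j m with h | h
  · have := Nat.choose_succ_right_eq m j
    have h2 : ((m.choose (j + 1) * (j + 1) : ℕ) : ℝ) = ((m.choose j * (m - j) : ℕ) : ℝ) := by
      rw [this]
    push_cast [h] at h2
    linarith
  · simp [Nat.choose_eq_zero_of_lt h, Nat.choose_eq_zero_of_lt (h.trans (Nat.lt_succ_self j))]

/-- The truncated first moment of the signed sum `m - 2 * i` telescopes. -/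
lemma first_moment (m j : ℕ) : ∑ i ∈ range (j + 1), ((m : ℝ) - 2 * i) * (m.choose i : ℝ)
    = ((m : ℝ) - j) * (m.choose j : ℝ) := by
  induction j with
  | zero => simp
  | succ j ih =>
    rw [Finset.sum_range_succ, ih, ← sub_mul_choose]; push_cast; ring

lemma second_moment (m j : ℕ) : ∑ i ∈ range (j + 1), ((m : ℝ) - 2 * i) ^ 2 * (m.choose i : ℝ)
    = m * ∑ i ∈ range (j + 1), (m.choose i : ℝ)
      + ((m : ℝ) - 2 * j - 1) * (((m : ℝ) - j) * (m.choose j : ℝ)) := by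
  induction j with
  | zero => simp; ring
  | succ j ih =>
    rw [Finset.sum_range_succ, ih, Finset.sum_range_succ _ (j + 1), ← sub_mul_choose]
    push_cast; ring

/-- Bound on the hazard rate `C(m, j) / ∑_{i ≤ j} C(m, i)` below the median. By `first_moment` the
conditional mean of `m - 2 * i` given `i ≤ j` is `m - j` times the hazard rate; it is controlled by
comparing its square with the conditional second moment. -/
lemma hazard (m j : ℕ) (hj : 2 * j ≤ m) :
    (m : ℝ) ^ 2 * (m.choose j : ℝ) ^ 2 ≤
      (∑ i ∈ range (j + 1), (m.choose i : ℝ)) ^ 2 * (8 * m + 4 * ((m : ℝ) - 2 * j) ^ 2) := by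
  set T := ∑ i ∈ range (j + 1), (m.choose i : ℝ) with hT
  set z := ((m : ℝ) - j) * (m.choose j : ℝ) with hz
  have hjm : 2 * (j : ℝ) ≤ m := by exact_mod_cast hj
  have hj0 : (0 : ℝ) ≤ j := by positivity
  have hT0 : 0 ≤ T := Finset.sum_nonneg fun i _ => by positivity
  have hz0 : 0 ≤ z := mul_nonneg (by linarith) (by positivity)
  have cs : z ^ 2 ≤ (m * T + ((m : ℝ) - 2 * j - 1) * z) * T := by
    rw [← first_moment m j] at hz
    have := Finset.sum_sq_le_sum_mul_sum_of_sq_le_mul (range (j + 1))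
      (r := fun i => ((m : ℝ) - 2 * i) * (m.choose i : ℝ))
      (f := fun i => ((m : ℝ) - 2 * i) ^ 2 * (m.choose i : ℝ)) (g := fun i => (m.choose i : ℝ))
      (fun i _ => by positivity) (fun i _ => by positivity) (fun i _ => le_of_eq (by ring))
    rw [second_moment m j, ← hz, ← hT, ← first_moment m j, ← hz] at this
    exact this
  -- with `s = m - 2 * j`, `cs` reads `z ^ 2 ≤ m * T ^ 2 + (s - 1) * z * T`;
  -- then `s * z * T ≤ (z ^ 2 + s ^ 2 * T ^ 2) / 2`
  have h2 : z ^ 2 ≤ T ^ 2 * (2 * m + ((m : ℝ) - 2 * j) ^ 2) := by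
    nlinarith [sq_nonneg (z - ((m : ℝ) - 2 * j) * T), mul_nonneg hz0 hT0]
  have h3 : (m : ℝ) * (m.choose j : ℝ) ≤ 2 * z := by
    rw [hz]
    have : (0 : ℝ) ≤ (m.choose j : ℝ) := by positivity
    nlinarith
  have h4 : ((m : ℝ) * (m.choose j : ℝ)) ^ 2 ≤ (2 * z) ^ 2 := by
    gcongr
  nlinarith

/-- The bound on `t ^ 2 / (1 - g ^ 2)`, where `t` is the tie probability of `m` fair `±1` signs
shifted by `s`, and `g` is the mean sign of the shifted sum. The middle term makes the value at
`m = 0` at least `1`. -/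
noncomputable def bnd (m : ℕ) (s : ℝ) : ℝ :=
  3 / 4 / ((m : ℝ) + 1) + (if m = 0 then 1 / 4 else 0)
    + 42 * s ^ 2 / (((m : ℝ) + 1) * ((m : ℝ) + 2))

lemma bnd_nonneg (m : ℕ) (s : ℝ) : 0 ≤ bnd m s := by
  unfold bnd; split_ifs <;> positivity

lemma bnd_neg (m : ℕ) (s : ℝ) : bnd m (-s) = bnd m s := by
  simp [bnd]

/-- The bound `t ^ 2 / (1 - g ^ 2) ≤ bnd m s`, in terms of unnormalized counts: `2 ^ m * t` is
`C(m, j)`, and `2 ^ m * (1 - |g|)` is `2 * L + C(m, j)`, with `L` the mass strictly below `j`. -/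
lemma core_bound (m j : ℕ) (hj : 2 * j ≤ m) (L : ℝ)
    (hL : L = ∑ i ∈ range j, (m.choose i : ℝ)) :
    (m.choose j : ℝ) ^ 2 / (2 * L + m.choose j)
      + (m.choose j : ℝ) ^ 2 / (2 * 2 ^ m - (2 * L + m.choose j))
      ≤ 2 * 2 ^ m * bnd m ((m : ℝ) - 2 * j) := by
  rcases Nat.eq_zero_or_pos m with rfl | hm
  · obtain rfl : j = 0 := by omega
    simp only [range_zero, sum_empty] at hL
    subst hL
    norm_num [bnd]
  set t := (m.choose j : ℝ) with ht
  set s := (m : ℝ) - 2 * j with hs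
  set N := (2 : ℝ) ^ m with hN
  have hs0 : 0 ≤ s := by
    have : 2 * (j : ℝ) ≤ m := by exact_mod_cast hj
    linarith
  have hN0 : 0 < N := by positivity
  have hm0 : (1 : ℝ) ≤ m := by exact_mod_cast hm
  have hm1 : (0 : ℝ) < m := by linarith
  have ht0 : 0 < t := by
    have : 0 < m.choose j := Nat.choose_pos (by omega)
    rw [ht]; exact_mod_cast this
  have hL0 : 0 ≤ L := by rw [hL]; positivity
  set X := 2 * L + t with hX
  -- the signed gap `N - X` between the two tails is a sum of `m - 2 * j` central terms
  have hsum : N - X = ∑ i ∈ Ico j (m - j), (m.choose i : ℝ) := by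
    have h1 : ∑ i ∈ range (m + 1), (m.choose i : ℝ) = N := by
      rw [hN]; exact_mod_cast Nat.sum_range_choose m
    have h2 : ∑ i ∈ range (m - j), (m.choose i : ℝ) + (L + t) = N := by
      rw [← h1, ← Finset.sum_range_add_sum_Ico _ (show m - j ≤ m + 1 by omega)]
      congr 1
      rw [hL, ht, ← Finset.sum_range_succ (fun i => (m.choose i : ℝ)), ← Finset.sum_range_reflect]
      rw [Finset.sum_Ico_eq_sum_range, show m + 1 - (m - j) = j + 1 by omega]
      refine Finset.sum_congr rfl fun i hi => ?_
      have : i < j + 1 := Finset.mem_range.1 hi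
      rw [show j + 1 - 1 - i = m - (m - j + i) by omega, Nat.choose_symm (by omega)]
    have h3 := Finset.sum_range_add_sum_Ico (fun i => (m.choose i : ℝ)) (show j ≤ m - j by omega)
    rw [← hL] at h3
    linarith
  set κ : ℝ := 3 / 4 / ((m : ℝ) + 1) with hκ
  have hκ0 : 0 < κ := by positivity
  have hc : ∀ i, (m.choose i : ℝ) ^ 2 ≤ κ * N ^ 2 := by
    intro i
    have := choose_sq_bound m i hm
    have e : κ * N ^ 2 = 3 * N ^ 2 / (4 * ((m : ℝ) + 1)) := by rw [hκ]; field_simp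
    rw [e, le_div_iff₀ (by positivity)]
    linarith
  have hg0 : 0 ≤ N - X := by rw [hsum]; positivity
  have hg1 : (N - X) ^ 2 ≤ s ^ 2 * (κ * N ^ 2) := by
    have h1 : N - X ≤ s * Real.sqrt (κ * N ^ 2) := by
      rw [hsum]
      have := Finset.sum_le_card_nsmul (Ico j (m - j)) (fun i => (m.choose i : ℝ))
        (Real.sqrt (κ * N ^ 2)) (fun i _ => Real.le_sqrt_of_sq_le (hc i))
      rw [Nat.card_Ico, nsmul_eq_mul, show m - j - j = m - 2 * j by omega,
        Nat.cast_sub hj] at this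
      push_cast at this
      exact this
    calc (N - X) ^ 2 ≤ (s * Real.sqrt (κ * N ^ 2)) ^ 2 := by gcongr
      _ = s ^ 2 * (κ * N ^ 2) := by rw [mul_pow, Real.sq_sqrt (by positivity)]
  have hX0 : 0 < X := by positivity
  set Y := X * (2 * N - X) with hY
  have hXY : X ^ 2 ≤ Y := by nlinarith
  have hY0 : 0 < Y := lt_of_lt_of_le (by positivity) hXY
  have hg2 : (N - X) ^ 2 ≤ N ^ 2 := by nlinarith
  have hhaz : (m : ℝ) ^ 2 * t ^ 2 ≤ Y * (8 * m + 4 * s ^ 2) := by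
    have h1 := hazard m j hj
    rw [Finset.sum_range_succ, ← hL] at h1
    refine h1.trans ?_
    have : (L + t) ^ 2 ≤ Y := le_trans (by gcongr; linarith) hXY
    gcongr
  -- here `Y = N ^ 2 - (N - X) ^ 2` is `N ^ 2 * (1 - g ^ 2)`
  have hmain : t ^ 2 ≤ Y * bnd m s := by
    have hB : κ + 8 * κ * s ^ 2 / m + 4 * s ^ 2 / m ^ 2 ≤ bnd m s := by
      have e1 : 8 * κ * s ^ 2 / m ≤ 18 * s ^ 2 / (((m : ℝ) + 1) * ((m : ℝ) + 2)) := by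
        rw [hκ, div_le_div_iff₀ (by positivity) (by positivity)]
        field_simp
        nlinarith [sq_nonneg s]
      have e2 : 4 * s ^ 2 / m ^ 2 ≤ 24 * s ^ 2 / (((m : ℝ) + 1) * ((m : ℝ) + 2)) := by
        rw [div_le_div_iff₀ (by positivity) (by positivity)]
        have : ((m : ℝ) + 1) * ((m : ℝ) + 2) ≤ 6 * m ^ 2 := by nlinarith
        nlinarith [mul_le_mul_of_nonneg_left this (sq_nonneg s)]
      have e3 : bnd m s = κ + (18 * s ^ 2 / (((m : ℝ) + 1) * ((m : ℝ) + 2))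
          + 24 * s ^ 2 / (((m : ℝ) + 1) * ((m : ℝ) + 2))) := by
        rw [bnd, if_neg (by omega), ← hκ]; ring
      linarith
    refine le_trans ?_ (mul_le_mul_of_nonneg_left hB hY0.le)
    have e4 : t ^ 2 * N ^ 2 = t ^ 2 * Y + t ^ 2 * (N - X) ^ 2 := by rw [hY]; ring
    have e5 : t ^ 2 ≤ Y * (8 * m + 4 * s ^ 2) / m ^ 2 := by
      rw [le_div_iff₀ (by positivity)]; linarith
    have e6 : t ^ 2 * (N - X) ^ 2 ≤ N ^ 2 * (Y * (8 * κ * s ^ 2 / m + 4 * s ^ 2 / m ^ 2)) := by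
      calc t ^ 2 * (N - X) ^ 2 ≤ Y * (8 * m + 4 * s ^ 2) / m ^ 2 * (N - X) ^ 2 := by gcongr
        _ = Y * (8 / m) * (N - X) ^ 2 + Y * (4 * s ^ 2 / m ^ 2) * (N - X) ^ 2 := by
          field_simp
        _ ≤ Y * (8 / m) * (s ^ 2 * (κ * N ^ 2)) + Y * (4 * s ^ 2 / m ^ 2) * N ^ 2 := by gcongr
        _ = _ := by ring
    have e7 : t ^ 2 * Y ≤ N ^ 2 * (Y * κ) := by
      have := mul_le_mul_of_nonneg_right (hc j) hY0.le
      linarith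
    have : N ^ 2 * t ^ 2 ≤ N ^ 2 * (Y * (κ + 8 * κ * s ^ 2 / m + 4 * s ^ 2 / m ^ 2)) := by
      linarith
    exact le_of_mul_le_mul_left this (by positivity)
  have hZ : 0 < 2 * N - X := by linarith
  have : t ^ 2 / X + t ^ 2 / (2 * N - X) = 2 * N * (t ^ 2 / Y) := by
    rw [hY]; field_simp; ring
  rw [this]
  have : t ^ 2 / Y ≤ bnd m s := by rw [div_le_iff₀ hY0]; linarith
  gcongr

/-- `core_bound` without `2 * j ≤ m`: replacing `j` by `m - j` exchanges the two tails. -/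
lemma core_bound' (m j : ℕ) (hj : j ≤ m) (L : ℝ)
    (hL : L = ∑ i ∈ range j, (m.choose i : ℝ)) :
    (m.choose j : ℝ) ^ 2 / (2 * L + m.choose j)
      + (m.choose j : ℝ) ^ 2 / (2 * 2 ^ m - (2 * L + m.choose j))
      ≤ 2 * 2 ^ m * bnd m ((m : ℝ) - 2 * j) := by
  rcases le_total (2 * j) m with h | h
  · exact core_bound m j h L hL
  · have h1 := core_bound m (m - j) (by omega) _ rfl
    have h2 : ∑ i ∈ range (m - j), (m.choose i : ℝ) + (L + m.choose j) = 2 ^ m := by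
      have h1 : ∑ i ∈ range (m + 1), (m.choose i : ℝ) = 2 ^ m := by
        exact_mod_cast Nat.sum_range_choose m
      rw [← h1, ← Finset.sum_range_add_sum_Ico _ (show m - j ≤ m + 1 by omega)]
      congr 1
      rw [hL, ← Finset.sum_range_succ (fun i => (m.choose i : ℝ)), ← Finset.sum_range_reflect]
      rw [Finset.sum_Ico_eq_sum_range, show m + 1 - (m - j) = j + 1 by omega]
      refine Finset.sum_congr rfl fun i hi => ?_
      have : i < j + 1 := Finset.mem_range.1 hi
      rw [show j + 1 - 1 - i = m - (m - j + i) by omega, Nat.choose_symm (by omega)]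
    rw [Nat.choose_symm hj, Nat.cast_sub hj, show (m : ℝ) - 2 * (m - j) = -(m - 2 * j) by ring,
      bnd_neg] at h1
    have e1 : 2 * ∑ i ∈ range (m - j), (m.choose i : ℝ) + m.choose j
        = 2 * 2 ^ m - (2 * L + m.choose j) := by linarith
    rw [e1, sub_sub_cancel, add_comm] at h1
    exact h1

/-! ### Majority with some bits fixed -/

lemma hw_split {n : ℕ} (k : Fin n) (A : Finset (Fin n)) (hA : A ⊆ univ.erase k)
    (x : Fin n → Bool) :
    hw x = (A.filter (fun i => x i = true)).card + (x k).toNat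
      + ((univ.erase k \ A).filter (fun i => x i = true)).card := by
  have h : ∀ i, (if x i = true then 1 else 0) = (x i).toNat := by
    intro i; cases x i <;> rfl
  simp only [hw, Finset.card_filter, h]
  rw [← Finset.add_sum_erase _ _ (mem_univ k), ← Finset.sum_sdiff hA]
  ring

/-- Given the bits on `A` and at `k`, the weight of `x` is determined by how many of the remaining
bits are ones. -/
lemma count_fiber {n : ℕ} (k : Fin n) (A : Finset (Fin n)) (hA : A ⊆ univ.erase k)
    (y : Fin n → Bool) (β : Bool) (F : ℕ → ℝ) :
    ∑ x : Fin n → Bool, (if (∀ i ∈ A, y i = x i) ∧ x k = β then F (hw x) else 0)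
      = ∑ j ∈ range ((univ.erase k \ A).card + 1), ((univ.erase k \ A).card.choose j : ℝ) *
          F ((A.filter (fun i => y i = true)).card + β.toNat + j) := by
  set R := univ.erase k \ A with hR
  have h1 := Finset.sum_powerset_apply_card
    (fun j => F ((A.filter (fun i => y i = true)).card + β.toNat + j)) (x := R)
  simp only [nsmul_eq_mul] at h1
  rw [← h1, ← Finset.sum_filter]
  have hkA : k ∉ A := fun h => by simpa using hA h
  refine Finset.sum_bij' (fun x _ => R.filter (fun i => x i = true))
    (fun S _ i => if i ∈ A then y i else if i = k then β else decide (i ∈ S)) ?_ ?_ ?_ ?_ ?_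
  · intro x _
    simp
  · intro S _
    simp only [mem_filter, mem_univ, true_and]
    refine ⟨fun i hi => by simp [hi], by simp [hkA]⟩
  · intro x hx
    simp only [mem_filter, mem_univ, true_and] at hx
    funext i
    by_cases hi : i ∈ A
    · simp [hi, hx.1 i hi]
    · by_cases hik : i = k
      · subst hik; simp [hi, hx.2]
      · simp [hi, hik, hR]
  · intro S hS
    have hS' : S ⊆ R := by simpa using hS
    ext i
    simp only [mem_filter]
    constructor
    · rintro ⟨h1, h2⟩
      have : i ∉ A ∧ i ≠ k := by simp [hR] at h1; tauto
      simpa [this.1, this.2] using h2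
    · intro hi
      have h1 := hS' hi
      refine ⟨h1, ?_⟩
      have : i ∉ A ∧ i ≠ k := by simp [hR] at h1; tauto
      simp [this.1, this.2, hi]
  · intro x hx
    simp only [mem_filter, mem_univ, true_and] at hx
    rw [hw_split k A hA x, hx.2]
    congr 3
    congr 1
    refine Finset.filter_congr fun i hi => ?_
    rw [hx.1 i hi]

/-- The number of ways to fill `m` free bits such that, together with `a` ones
among the fixed bits and the bit `β`, the majority of the `2 * q + 1` bits is `c`. -/
noncomputable def cnt (q m a : ℕ) (c β : Bool) : ℝ :=
  ∑ j ∈ range (m + 1), (m.choose j : ℝ) *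
    (if decide (2 * q + 1 < 2 * (a + β.toNat + j)) = c then 1 else 0)

lemma cnt_nonneg (q m a : ℕ) (c β : Bool) : 0 ≤ cnt q m a c β :=
  Finset.sum_nonneg fun j _ => by positivity

lemma cnt_true (q m a : ℕ) (β : Bool) : cnt q m a true β = 2 ^ m - cnt q m a false β := by
  have h1 : ∑ i ∈ range (m + 1), (m.choose i : ℝ) = 2 ^ m := by
    exact_mod_cast Nat.sum_range_choose m
  rw [← h1, cnt, cnt, ← Finset.sum_sub_distrib]
  refine Finset.sum_congr rfl fun j _ => ?_
  by_cases h : 2 * q + 1 < 2 * (a + β.toNat + j) <;> simp [h]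

/-- The bit `β` affects the majority only in case of a tie `a + j = q`, so the difference of the
counts is `± C(m, q - a)`, and the two sums (over `c`) are the two tails of `core_bound'`. -/
lemma cnt_tie (q m a : ℕ) (s : ℝ) (hs : s = (m : ℝ) - 2 * ((q : ℝ) - a)) :
    ∑ c : Bool, (cnt q m a c true - cnt q m a c false) ^ 2
        / (cnt q m a c true + cnt q m a c false)
      ≤ 2 * 2 ^ m * bnd m s := by
  by_cases hq : a ≤ q ∧ q - a ≤ m
  · obtain ⟨haq, hj⟩ := hq
    set j := q - a with hjdef
    have hlow : ∀ r ≤ m + 1, ∀ β : Bool,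
        (∀ i, (¬ (2 * q + 1 < 2 * (a + β.toNat + i))) ↔ i < r) →
        cnt q m a false β = ∑ i ∈ range r, (m.choose i : ℝ) := by
      intro r hr β h
      have : range r = (range (m + 1)).filter (fun i => i < r) := by
        ext i; simp only [mem_range, mem_filter]; omega
      rw [this, Finset.sum_filter, cnt]
      refine Finset.sum_congr rfl fun i _ => ?_
      have := h i
      by_cases h' : i < r <;> simp_all
    have e1 : cnt q m a false true = ∑ i ∈ range j, (m.choose i : ℝ) :=
      hlow j (by omega) true fun i => by simp only [Bool.toNat_true]; omega
    have e2 : cnt q m a false false = ∑ i ∈ range (j + 1), (m.choose i : ℝ) :=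
      hlow (j + 1) (by omega) false fun i => by simp only [Bool.toNat_false]; omega
    have hb := core_bound' m j hj _ rfl
    have hs' : s = (m : ℝ) - 2 * j := by rw [hs, hjdef, Nat.cast_sub haq]
    rw [Fintype.sum_bool, cnt_true, cnt_true, e1, e2, Finset.sum_range_succ, hs']
    refine le_trans (le_of_eq ?_) hb
    rw [add_comm]
    congr 2 <;> ring
  -- otherwise no tie is possible
  · have hz : ∀ c, cnt q m a c true - cnt q m a c false = 0 := by
      intro c
      rw [sub_eq_zero]
      refine Finset.sum_congr rfl fun i hi => ?_
      have hi' := Finset.mem_range.1 hi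
      have : (2 * q + 1 < 2 * (a + Bool.toNat true + i)) ↔
          (2 * q + 1 < 2 * (a + Bool.toNat false + i)) := by
        simp only [Bool.toNat_true, Bool.toNat_false]; omega
      simp only [this]
    simp only [hz]
    have := bnd_nonneg m s
    simp; positivity

/-! ### Decomposition of the channel -/

/-- Cauchy–Schwarz in the form of joint convexity of `(v, u) ↦ v ^ 2 / u`. -/
lemma weighted_sq_div_le {ι : Type*} (s : Finset ι) (w V U : ι → ℝ) (hw : ∀ i ∈ s, 0 ≤ w i)
    (hVU : ∀ i ∈ s, |V i| ≤ U i) :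
    (∑ i ∈ s, w i * V i) ^ 2 / (∑ i ∈ s, w i * U i) ≤ ∑ i ∈ s, w i * (V i ^ 2 / U i) := by
  have hU : ∀ i ∈ s, 0 ≤ U i := fun i hi => (abs_nonneg _).trans (hVU i hi)
  have h1 : ∀ i ∈ s, 0 ≤ w i * (V i ^ 2 / U i) := fun i hi =>
    mul_nonneg (hw i hi) (div_nonneg (sq_nonneg _) (hU i hi))
  have h2 : ∀ i ∈ s, 0 ≤ w i * U i := fun i hi => mul_nonneg (hw i hi) (hU i hi)
  refine div_le_of_le_mul₀ (Finset.sum_nonneg h2) (Finset.sum_nonneg h1) ?_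
  refine Finset.sum_sq_le_sum_mul_sum_of_sq_le_mul s h1 h2 fun i hi => le_of_eq ?_
  by_cases h : U i = 0
  · have : V i = 0 := by simpa [h] using hVU i hi
    simp [this]
  · field_simp

/-- The channel keeps each bit with probability `ρ` and replaces it by a fair bit otherwise; `A` is
the set of kept bits. -/
lemma prod_kernel {n : ℕ} (ρ : ℝ) (B : Finset (Fin n)) (x y : Fin n → Bool) :
    ∏ i ∈ B, (if y i = x i then 1 - (1 - ρ) / 2 else (1 - ρ) / 2)
      = ∑ A ∈ B.powerset, ρ ^ A.card * ((1 - ρ) / 2) ^ (B \ A).card *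
          (if ∀ i ∈ A, y i = x i then 1 else 0) := by
  have : ∀ i, (if y i = x i then 1 - (1 - ρ) / 2 else (1 - ρ) / 2)
      = ρ * (if y i = x i then 1 else 0) + (1 - ρ) / 2 := by
    intro i; split_ifs <;> ring
  simp only [this]
  rw [Finset.prod_add]
  refine Finset.sum_congr rfl fun A _ => ?_
  rw [Finset.prod_mul_distrib, Finset.prod_const, Finset.prod_const, Finset.prod_ite_zero]
  simp only [Finset.prod_const_one]
  ring

/-- The number of ones of `y` inside `A`. -/
def onesIn {n : ℕ} (A : Finset (Fin n)) (y : Fin n → Bool) : ℕ :=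
  (A.filter (fun i => y i = true)).card

/-- The joint law of `Y` and the majority, decomposed according to the set `A` of kept bits among
those other than `k`. -/
lemma noisy_expand {n q : ℕ} (hn : n = 2 * q + 1) (ρ : ℝ) (k : Fin n) (c : Bool)
    (y : Fin n → Bool) :
    noisyPMF n ((1 - ρ) / 2) (majF n) c y
      = ∑ A ∈ (univ.erase k).powerset,
          ((2 : ℝ) ^ n)⁻¹ * (ρ ^ A.card * ((1 - ρ) / 2) ^ (univ.erase k \ A).card) *
          ((1 + sgn (y k) * ρ) / 2 * cnt q (univ.erase k \ A).card (onesIn A y) c true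
          + (1 - sgn (y k) * ρ) / 2 * cnt q (univ.erase k \ A).card (onesIn A y) c false) := by
  have hcnt : ∀ A ∈ (univ.erase k).powerset, ∀ β,
      cnt q (univ.erase k \ A).card (onesIn A y) c β
        = ∑ x : Fin n → Bool, if (∀ i ∈ A, y i = x i) ∧ x k = β then
            (if majF n x = c then (1 : ℝ) else 0) else 0 := by
    intro A hA β
    rw [Finset.mem_powerset] at hA
    rw [cnt, onesIn]
    have := count_fiber k A hA y β (fun w => if decide (2 * q + 1 < 2 * w) = c then 1 else 0)
    rw [← this]
    simp only [majF, hn]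
  have hx : ∀ x : Fin n → Bool,
      (if majF n x = c then ((2 : ℝ) ^ n)⁻¹ *
        ∏ i : Fin n, (if y i = x i then 1 - (1 - ρ) / 2 else (1 - ρ) / 2) else 0)
      = ∑ A ∈ (univ.erase k).powerset,
          ((2 : ℝ) ^ n)⁻¹ * (ρ ^ A.card * ((1 - ρ) / 2) ^ (univ.erase k \ A).card) *
          ((1 + sgn (y k) * ρ) / 2 * (if (∀ i ∈ A, y i = x i) ∧ x k = true then
            (if majF n x = c then (1 : ℝ) else 0) else 0)
          + (1 - sgn (y k) * ρ) / 2 * (if (∀ i ∈ A, y i = x i) ∧ x k = false then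
            (if majF n x = c then (1 : ℝ) else 0) else 0)) := by
    intro x
    by_cases hc : majF n x = c
    · rw [if_pos hc, ← Finset.mul_prod_erase _ _ (mem_univ k), prod_kernel, Finset.mul_sum,
        Finset.mul_sum]
      refine Finset.sum_congr rfl fun A _ => ?_
      by_cases hA : ∀ i ∈ A, y i = x i
      · cases hy : y k <;> cases hxk : x k <;> simp [hc, hA, sgn] <;> ring_nf
      · simp [hA]
    · simp [hc]
  rw [noisyPMF, Finset.sum_congr rfl fun x _ => hx x, Finset.sum_comm]
  refine Finset.sum_congr rfl fun A hA => ?_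
  rw [hcnt A hA, hcnt A hA, ← Finset.mul_sum, Finset.sum_add_distrib, ← Finset.mul_sum,
    ← Finset.mul_sum]

lemma onesIn_flip {n : ℕ} (k : Fin n) (A : Finset (Fin n)) (hA : A ⊆ univ.erase k)
    (y : Fin n → Bool) : onesIn A (flipAt k y) = onesIn A y := by
  unfold onesIn
  congr 1
  refine Finset.filter_congr fun i hi => ?_
  have : i ≠ k := by simpa using hA hi
  simp [flipAt, Function.update_of_ne this]

lemma sum_sgn {n : ℕ} (A : Finset (Fin n)) (y : Fin n → Bool) :
    ∑ i ∈ A, sgn (y i) = 2 * (onesIn A y : ℝ) - A.card := by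
  rw [onesIn, Finset.card_filter, Finset.card_eq_sum_ones]
  push_cast
  rw [Finset.mul_sum, ← Finset.sum_sub_distrib]
  refine Finset.sum_congr rfl fun i _ => ?_
  cases y i <;> norm_num [sgn]

lemma sum_sgn_sq {n : ℕ} (A : Finset (Fin n)) :
    ∑ y : Fin n → Bool, (∑ i ∈ A, sgn (y i)) ^ 2 = 2 ^ n * (A.card : ℝ) := by
  induction A using Finset.induction_on with
  | empty => simp
  | insert k A hk ih =>
    have h0 : ∑ y : Fin n → Bool, sgn (y k) * ∑ i ∈ A, sgn (y i) = 0 := by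
      have h1 := sum_flipAt k (fun y : Fin n → Bool => sgn (y k) * ∑ i ∈ A, sgn (y i))
      have h2 : ∀ y : Fin n → Bool, sgn (flipAt k y k) * ∑ i ∈ A, sgn (flipAt k y i)
          = - (sgn (y k) * ∑ i ∈ A, sgn (y i)) := by
        intro y
        have : ∑ i ∈ A, sgn (flipAt k y i) = ∑ i ∈ A, sgn (y i) := by
          refine Finset.sum_congr rfl fun i hi => ?_
          have : i ≠ k := fun h => hk (h ▸ hi)
          simp [flipAt, Function.update_of_ne this]
        rw [this]; simp [flipAt, sgn_not]
      simp only [h2, Finset.sum_neg_distrib] at h1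
      linarith
    have h3 : ∀ y : Fin n → Bool, (∑ i ∈ insert k A, sgn (y i)) ^ 2
        = 1 + 2 * (sgn (y k) * ∑ i ∈ A, sgn (y i)) + (∑ i ∈ A, sgn (y i)) ^ 2 := by
      intro y
      rw [Finset.sum_insert hk]
      linear_combination sgn_mul_self (y k)
    simp only [h3]
    rw [Finset.sum_add_distrib, Finset.sum_add_distrib, ← Finset.mul_sum, h0, ih,
      Finset.card_insert_of_notMem hk]
    simp; ring

/-- The average over `y` of the bound `bnd` attached to the kept set `A`. -/
lemma avg_bnd {n : ℕ} (A : Finset (Fin n)) (m : ℕ) :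
    ((2 : ℝ) ^ n)⁻¹ * ∑ y : Fin n → Bool, bnd m (∑ i ∈ A, sgn (y i))
      = 3 / 4 / ((m : ℝ) + 1) + (if m = 0 then 1 / 4 else 0)
        + 42 * A.card / (((m : ℝ) + 1) * ((m : ℝ) + 2)) := by
  simp only [bnd]
  rw [Finset.sum_add_distrib, ← Finset.sum_div, ← Finset.mul_sum, sum_sgn_sq]
  simp only [sum_const, card_univ, Fintype.card_pi, Fintype.card_bool, prod_const,
    Fintype.card_fin, nsmul_eq_mul]
  push_cast
  have : (2 : ℝ) ^ n ≠ 0 := by positivity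
  field_simp

/-- Revealing the kept set `A` to the predictor of bit `k` increases the squared bias. -/
lemma chi_sum_le {n q : ℕ} (hn : n = 2 * q + 1) (ρ : ℝ) (h0 : 0 < ρ) (h1 : ρ < 1) (k : Fin n) :
    ∑ c : Bool, ∑ y, (noisyPMF n ((1 - ρ) / 2) (majF n) c y
          - noisyPMF n ((1 - ρ) / 2) (majF n) c (flipAt k y)) ^ 2
        / (noisyPMF n ((1 - ρ) / 2) (majF n) c y
          + noisyPMF n ((1 - ρ) / 2) (majF n) c (flipAt k y))
      ≤ 2 * ρ ^ 2 * ∑ A ∈ (univ.erase k).powerset,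
          ρ ^ A.card * (1 - ρ) ^ (univ.erase k \ A).card *
            (((2 : ℝ) ^ n)⁻¹ * ∑ y : Fin n → Bool,
              bnd (univ.erase k \ A).card (∑ i ∈ A, sgn (y i))) := by
  set w : Finset (Fin n) → ℝ := fun A =>
    ((2 : ℝ) ^ n)⁻¹ * (ρ ^ A.card * ((1 - ρ) / 2) ^ (univ.erase k \ A).card) with hw
  have hw0 : ∀ A, 0 ≤ w A := by
    intro A
    have : 0 ≤ 1 - ρ := by linarith
    simp only [hw]; positivity
  set C : Bool → Bool → (Fin n → Bool) → Finset (Fin n) → ℝ := fun c β y A =>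
    cnt q (univ.erase k \ A).card (onesIn A y) c β with hC
  have hC0 : ∀ c β y A, 0 ≤ C c β y A := fun c β y A => cnt_nonneg _ _ _ _ _
  have hexp : ∀ c y, noisyPMF n ((1 - ρ) / 2) (majF n) c y
      = ∑ A ∈ (univ.erase k).powerset, w A * ((1 + sgn (y k) * ρ) / 2 * C c true y A
        + (1 - sgn (y k) * ρ) / 2 * C c false y A) := fun c y => noisy_expand hn ρ k c y
  have hexp' : ∀ c y, noisyPMF n ((1 - ρ) / 2) (majF n) c (flipAt k y)
      = ∑ A ∈ (univ.erase k).powerset, w A * ((1 - sgn (y k) * ρ) / 2 * C c true y A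
        + (1 + sgn (y k) * ρ) / 2 * C c false y A) := by
    intro c y
    rw [hexp]
    refine Finset.sum_congr rfl fun A hA => ?_
    have hk : flipAt k y k = !y k := by simp [flipAt]
    simp only [hC]
    rw [onesIn_flip k A (Finset.mem_powerset.1 hA), hk, sgn_not]
    ring
  have hpt : ∀ c y, (noisyPMF n ((1 - ρ) / 2) (majF n) c y
          - noisyPMF n ((1 - ρ) / 2) (majF n) c (flipAt k y)) ^ 2
        / (noisyPMF n ((1 - ρ) / 2) (majF n) c y
          + noisyPMF n ((1 - ρ) / 2) (majF n) c (flipAt k y))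
      ≤ ρ ^ 2 * ∑ A ∈ (univ.erase k).powerset, w A * ((C c true y A - C c false y A) ^ 2
          / (C c true y A + C c false y A)) := by
    intro c y
    have hdiff : noisyPMF n ((1 - ρ) / 2) (majF n) c y
          - noisyPMF n ((1 - ρ) / 2) (majF n) c (flipAt k y)
        = sgn (y k) * ρ *
          ∑ A ∈ (univ.erase k).powerset, w A * (C c true y A - C c false y A) := by
      rw [hexp, hexp', ← Finset.sum_sub_distrib, Finset.mul_sum]
      refine Finset.sum_congr rfl fun A _ => ?_
      ring
    have hadd : noisyPMF n ((1 - ρ) / 2) (majF n) c y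
          + noisyPMF n ((1 - ρ) / 2) (majF n) c (flipAt k y)
        = ∑ A ∈ (univ.erase k).powerset, w A * (C c true y A + C c false y A) := by
      rw [hexp, hexp', ← Finset.sum_add_distrib]
      refine Finset.sum_congr rfl fun A _ => ?_
      ring
    have hs : (sgn (y k) * ρ) ^ 2 = ρ ^ 2 := by
      linear_combination ρ ^ 2 * sgn_mul_self (y k)
    rw [hdiff, hadd, mul_pow, hs, mul_div_assoc]
    refine mul_le_mul_of_nonneg_left ?_ (sq_nonneg ρ)
    refine weighted_sq_div_le _ w _ _ (fun A _ => hw0 A) fun A _ => ?_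
    have e1 := hC0 c true y A
    have e2 := hC0 c false y A
    rw [abs_le]; constructor <;> linarith
  calc _ ≤ ∑ c : Bool, ∑ y, ρ ^ 2 * ∑ A ∈ (univ.erase k).powerset,
          w A * ((C c true y A - C c false y A) ^ 2 / (C c true y A + C c false y A)) :=
        Finset.sum_le_sum fun c _ => Finset.sum_le_sum fun y _ => hpt c y
    _ = ρ ^ 2 * ∑ A ∈ (univ.erase k).powerset, w A * ∑ y, ∑ c : Bool,
          ((C c true y A - C c false y A) ^ 2 / (C c true y A + C c false y A)) := by
        simp only [← Finset.mul_sum]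
        congr 1
        rw [Finset.sum_comm]
        simp only [Finset.mul_sum]
        rw [Finset.sum_congr rfl fun y _ => Finset.sum_comm, Finset.sum_comm]
    _ ≤ ρ ^ 2 * ∑ A ∈ (univ.erase k).powerset, w A * ∑ y : Fin n → Bool,
          2 * 2 ^ (univ.erase k \ A).card *
            bnd (univ.erase k \ A).card (∑ i ∈ A, sgn (y i)) := by
        refine mul_le_mul_of_nonneg_left ?_ (sq_nonneg ρ)
        refine Finset.sum_le_sum fun A hA => mul_le_mul_of_nonneg_left ?_ (hw0 A)
        refine Finset.sum_le_sum fun y _ => ?_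
        refine cnt_tie q _ _ _ ?_
        have hc := Finset.card_sdiff_add_card_eq_card (Finset.mem_powerset.1 hA)
        rw [Finset.card_erase_of_mem (mem_univ k), card_univ, Fintype.card_fin] at hc
        have hc' : ((univ.erase k \ A).card : ℝ) + A.card = 2 * q := by
          exact_mod_cast (by omega : (univ.erase k \ A).card + A.card = 2 * q)
        rw [sum_sgn]; linarith
    _ = _ := by
        rw [Finset.mul_sum, Finset.mul_sum]
        refine Finset.sum_congr rfl fun A _ => ?_
        rw [← Finset.mul_sum]
        simp only [hw, div_pow]
        have : (2 : ℝ) ^ (univ.erase k \ A).card ≠ 0 := by positivity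
        field_simp

/-! ### Averaging over the kept set, and the comparison -/

/-- With `j = |A|` and `m = N - j`, dividing `C(N, j)` by `m + 1`, or multiplying it by
`j / ((m + 1) * (m + 2))`, yields up to the factor `1 / (N + 1)` another binomial coefficient,
`C(N + 1, j)` or `C(N + 1, j - 1)`. Each sum is thus controlled by the binomial theorem of
order `N + 1`. -/
lemma binom_avg_le (N : ℕ) (hN : 2 ≤ N) (ρ : ℝ) (h0 : 0 < ρ) (h1 : ρ ≤ 1 / 1000) :
    ((N : ℝ) + 1) * ∑ j ∈ range (N + 1), (N.choose j : ℝ) * (ρ ^ j * (1 - ρ) ^ (N - j) *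
      (3 / 4 / (((N - j : ℕ) : ℝ) + 1) + (if N - j = 0 then 1 / 4 else 0)
        + 42 * j / ((((N - j : ℕ) : ℝ) + 1) * (((N - j : ℕ) : ℝ) + 2)))) ≤ 9 / 10 := by
  set r := 1 - ρ with hr
  have hr0 : 0 < r := by linarith
  have hbin : ∑ i ∈ range (N + 2), ρ ^ i * r ^ (N + 1 - i) * ((N + 1).choose i : ℝ) = 1 := by
    have := add_pow ρ r (N + 1)
    rw [← this, hr]; simp
  have hnn : ∀ i, 0 ≤ ρ ^ i * r ^ (N + 1 - i) * ((N + 1).choose i : ℝ) := fun i => by positivity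
  have S1 : r * (((N : ℝ) + 1) * ∑ j ∈ range (N + 1), (N.choose j : ℝ) *
      (ρ ^ j * r ^ (N - j)) / (((N - j : ℕ) : ℝ) + 1)) ≤ 1 := by
    refine le_trans ?_ hbin.le
    rw [Finset.sum_range_succ _ (N + 1), Finset.mul_sum, Finset.mul_sum]
    refine le_add_of_le_of_nonneg (le_of_eq ?_) (hnn _)
    refine Finset.sum_congr rfl fun j hj => ?_
    have hj' : j ≤ N := by have := Finset.mem_range.1 hj; omega
    have e : ((N : ℝ) + 1) * (N.choose j : ℝ)
        = ((N + 1).choose j : ℝ) * (((N - j : ℕ) : ℝ) + 1) := by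
      have := Nat.choose_mul_succ_eq N j
      rw [show N + 1 - j = N - j + 1 by omega] at this
      have h : ((N.choose j * (N + 1) : ℕ) : ℝ) = (((N + 1).choose j * (N - j + 1) : ℕ) : ℝ) := by
        rw [this]
      push_cast at h ⊢
      linarith
    rw [show N + 1 - j = (N - j) + 1 by omega, pow_succ]
    have hp : (0 : ℝ) < ((N - j : ℕ) : ℝ) + 1 := by positivity
    rw [mul_div_assoc', mul_div_assoc', div_eq_iff hp.ne']
    linear_combination r * (ρ ^ j * r ^ (N - j)) * e
  have S3 : r ^ 2 * (((N : ℝ) + 1) * ∑ j ∈ range (N + 1), (N.choose j : ℝ) *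
      (ρ ^ j * r ^ (N - j)) * j / ((((N - j : ℕ) : ℝ) + 1) * (((N - j : ℕ) : ℝ) + 2))) ≤ ρ := by
    refine le_trans ?_ (le_of_eq (by rw [hbin, mul_one] :
      ρ * ∑ i ∈ range (N + 2), ρ ^ i * r ^ (N + 1 - i) * ((N + 1).choose i : ℝ) = ρ))
    rw [Finset.sum_range_succ' _ N, Finset.sum_range_succ _ (N + 1), Finset.sum_range_succ _ N]
    simp only [Nat.cast_zero, mul_zero, zero_div, add_zero]
    rw [mul_add, mul_add, Finset.mul_sum, Finset.mul_sum, Finset.mul_sum]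
    have p1 := mul_nonneg h0.le (hnn N)
    have p2 := mul_nonneg h0.le (hnn (N + 1))
    refine le_add_of_le_of_nonneg (le_add_of_le_of_nonneg (le_of_eq ?_) p1) p2
    refine Finset.sum_congr rfl fun j hj => ?_
    obtain ⟨i, rfl⟩ : ∃ i, N = j + 1 + i := by
      have := Finset.mem_range.1 hj; exact ⟨N - (j + 1), by omega⟩
    rw [show j + 1 + i - (j + 1) = i by omega, show j + 1 + i + 1 - j = i + 2 by omega]
    have e1 : (((j + 1 + i : ℕ) : ℝ) + 1) * ((j + 1 + i).choose (j + 1) : ℝ)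
        = ((j + 1 + i + 1).choose (j + 1) : ℝ) * ((i : ℝ) + 1) := by
      have := Nat.choose_mul_succ_eq (j + 1 + i) (j + 1)
      rw [show j + 1 + i + 1 - (j + 1) = i + 1 by omega] at this
      have h : (((j + 1 + i).choose (j + 1) * (j + 1 + i + 1) : ℕ) : ℝ)
        = (((j + 1 + i + 1).choose (j + 1) * (i + 1) : ℕ) : ℝ) := by
        rw [this]
      push_cast at h ⊢
      linarith
    have e2 : ((j + 1 + i + 1).choose (j + 1) : ℝ) * ((j : ℝ) + 1)
        = ((j + 1 + i + 1).choose j : ℝ) * ((i : ℝ) + 2) := by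
      have := Nat.choose_succ_right_eq (j + 1 + i + 1) j
      rw [show j + 1 + i + 1 - j = i + 2 by omega] at this
      exact_mod_cast this
    have hp : (0 : ℝ) < ((i : ℝ) + 1) * ((i : ℝ) + 2) := by positivity
    rw [mul_div_assoc', mul_div_assoc', div_eq_iff hp.ne']
    rw [pow_succ, pow_add r i 2]
    push_cast at e1 e2 ⊢
    linear_combination r ^ 2 * (ρ ^ j * ρ * r ^ i) * ((j : ℝ) + 1) * e1
      + r ^ 2 * (ρ ^ j * ρ * r ^ i) * ((i : ℝ) + 1) * e2
  have S2 : ((N : ℝ) + 1) * ∑ j ∈ range (N + 1), (N.choose j : ℝ) *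
      (ρ ^ j * r ^ (N - j)) * (if N - j = 0 then 1 / 4 else 0) ≤ ρ := by
    rw [Finset.sum_range_succ, Finset.sum_eq_zero]
    · simp only [Nat.choose_self, Nat.sub_self, pow_zero, if_true, Nat.cast_one]
      have hN' : ((N : ℝ) + 1) ≤ 2 ^ N := by
        exact_mod_cast (Nat.lt_two_pow_self : N < 2 ^ N)
      calc ((N : ℝ) + 1) * (0 + 1 * (ρ ^ N * 1) * (1 / 4))
          ≤ 2 ^ N * (0 + 1 * (ρ ^ N * 1) * (1 / 4)) := by gcongr
        _ = (2 * ρ) ^ N / 4 := by rw [mul_pow]; ring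
        _ ≤ (2 * ρ) ^ 1 / 4 := by
            gcongr ?_ / 4
            exact pow_le_pow_of_le_one (by linarith) (by linarith) (by omega)
        _ ≤ ρ := by linarith
    · intro j hj
      have := Finset.mem_range.1 hj
      rw [if_neg (by omega), mul_zero]
  have hsplit : ((N : ℝ) + 1) * ∑ j ∈ range (N + 1), (N.choose j : ℝ) * (ρ ^ j * r ^ (N - j) *
      (3 / 4 / (((N - j : ℕ) : ℝ) + 1) + (if N - j = 0 then 1 / 4 else 0)
        + 42 * j / ((((N - j : ℕ) : ℝ) + 1) * (((N - j : ℕ) : ℝ) + 2))))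
      = 3 / 4 * (((N : ℝ) + 1) * ∑ j ∈ range (N + 1), (N.choose j : ℝ) *
      (ρ ^ j * r ^ (N - j)) / (((N - j : ℕ) : ℝ) + 1))
      + ((N : ℝ) + 1) * ∑ j ∈ range (N + 1), (N.choose j : ℝ) *
      (ρ ^ j * r ^ (N - j)) * (if N - j = 0 then 1 / 4 else 0)
      + 42 * (((N : ℝ) + 1) * ∑ j ∈ range (N + 1), (N.choose j : ℝ) *
      (ρ ^ j * r ^ (N - j)) * j / ((((N - j : ℕ) : ℝ) + 1) * (((N - j : ℕ) : ℝ) + 2))) := by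
    simp only [Finset.mul_sum]
    rw [← Finset.sum_add_distrib, ← Finset.sum_add_distrib]
    refine Finset.sum_congr rfl fun j _ => ?_
    ring
  rw [hsplit]
  generalize ((N : ℝ) + 1) * ∑ j ∈ range (N + 1), (N.choose j : ℝ) *
      (ρ ^ j * r ^ (N - j)) / (((N - j : ℕ) : ℝ) + 1) = a at S1 ⊢
  generalize ((N : ℝ) + 1) * ∑ j ∈ range (N + 1), (N.choose j : ℝ) *
      (ρ ^ j * r ^ (N - j)) * j / ((((N - j : ℕ) : ℝ) + 1) * (((N - j : ℕ) : ℝ) + 2)) = b at S3 ⊢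
  have ha : a ≤ 1000 / 999 := by
    by_contra h
    push Not at h
    nlinarith
  have hb : b ≤ 1 / 500 := by
    by_contra h
    push Not at h
    have : (999 / 1000) ^ 2 ≤ r ^ 2 := by
      gcongr; linarith
    nlinarith
  linarith

lemma kept_avg_le {n : ℕ} (hn : 3 ≤ n) (ρ : ℝ) (h0 : 0 < ρ) (h1 : ρ ≤ 1 / 1000) (k : Fin n) :
    (n : ℝ) * ∑ A ∈ (univ.erase k).powerset,
          ρ ^ A.card * (1 - ρ) ^ (univ.erase k \ A).card *
            (((2 : ℝ) ^ n)⁻¹ * ∑ y : Fin n → Bool,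
              bnd (univ.erase k \ A).card (∑ i ∈ A, sgn (y i))) ≤ 9 / 10 := by
  obtain ⟨N, rfl⟩ : ∃ N, n = N + 1 := ⟨n - 1, by omega⟩
  have hcard : (univ.erase k).card = N := by
    rw [Finset.card_erase_of_mem (mem_univ k), card_univ, Fintype.card_fin]; omega
  refine le_trans (le_of_eq ?_) (binom_avg_le N (by omega) ρ h0 h1)
  push_cast
  congr 1
  have h2 := Finset.sum_powerset_apply_card (fun j => (ρ ^ j * (1 - ρ) ^ (N - j) *
      (3 / 4 / (((N - j : ℕ) : ℝ) + 1) + (if N - j = 0 then 1 / 4 else 0)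
        + 42 * j / ((((N - j : ℕ) : ℝ) + 1) * (((N - j : ℕ) : ℝ) + 2))))) (x := univ.erase k)
  simp only [nsmul_eq_mul, hcard] at h2
  rw [← h2]
  refine Finset.sum_congr rfl fun A hA => ?_
  rw [avg_bnd, Finset.card_sdiff_of_subset (Finset.mem_powerset.1 hA), hcard]

lemma noisyPMF_nonneg {n : ℕ} {α : ℝ} (h0 : 0 ≤ α) (h1 : α ≤ 1) (b : (Fin n → Bool) → Bool)
    (c : Bool) (y : Fin n → Bool) : 0 ≤ noisyPMF n α b c y := by
  refine Finset.sum_nonneg fun x _ => ?_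
  split_ifs
  · refine mul_nonneg (by positivity) (Finset.prod_nonneg fun i _ => ?_)
    split_ifs <;> linarith
  · exact le_rfl

lemma noisyPMF_mass {n : ℕ} (α : ℝ) (b : (Fin n → Bool) → Bool) :
    ∑ c : Bool, ∑ y, noisyPMF n α b c y = 1 := by
  have h : ∀ x : Fin n → Bool,
      ∑ y : Fin n → Bool, ∏ i, (if y i = x i then 1 - α else α) = 1 := by
    intro x
    have := Finset.prod_univ_sum (fun _ : Fin n => (univ : Finset Bool))
      (fun i b => if b = x i then 1 - α else α)
    rw [Fintype.piFinset_univ] at this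
    rw [← this]
    refine Finset.prod_eq_one fun i _ => ?_
    cases x i <;> simp
  rw [Finset.sum_comm]
  simp only [noisyPMF]
  have h2 : ∀ y : Fin n → Bool, ∑ c : Bool, (∑ x : Fin n → Bool,
      if b x = c then ((2 : ℝ) ^ n)⁻¹ * ∏ i : Fin n, (if y i = x i then 1 - α else α) else 0)
      = ∑ x : Fin n → Bool, ((2 : ℝ) ^ n)⁻¹ * ∏ i : Fin n, (if y i = x i then 1 - α else α) := by
    intro y
    rw [Finset.sum_comm]
    refine Finset.sum_congr rfl fun x _ => ?_
    simp
  simp only [h2]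
  rw [Finset.sum_comm]
  simp only [← Finset.mul_sum, h]
  simp

lemma maj_lower {n : ℕ} (hodd : Odd n) (hn : 3 ≤ n) (ρ : ℝ) (h0 : 0 < ρ) (h1 : ρ ≤ 1 / 1000) :
    (n : ℝ) / 4 - 9 / 40 * ρ ^ 2 ≤ noisySMSE n ((1 - ρ) / 2) (majF n) := by
  obtain ⟨q, hq⟩ := hodd
  set μ := noisyPMF n ((1 - ρ) / 2) (majF n) with hμ
  have hnn : ∀ c y, 0 ≤ μ c y := noisyPMF_nonneg (by linarith) (by linarith) _
  set X : Bool → Fin n → ℝ := fun c k =>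
    ∑ y, (μ c y - μ c (flipAt k y)) ^ 2 / (μ c y + μ c (flipAt k y)) with hX
  have hk : ∀ k, ∑ c : Bool, X c k ≤ 2 * ρ ^ 2 * (9 / 10 / n) := by
    intro k
    refine (chi_sum_le hq ρ h0 (by linarith) k).trans ?_
    refine mul_le_mul_of_nonneg_left ?_ (by positivity)
    have hn0 : (0 : ℝ) < n := by positivity
    rw [le_div_iff₀ hn0, mul_comm]
    exact kept_avg_le hn ρ h0 h1 k
  have hmass := noisyPMF_mass ((1 - ρ) / 2) (majF n)
  calc (n : ℝ) / 4 - 9 / 40 * ρ ^ 2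
      = ∑ k : Fin n, (1 / 4 * ∑ c : Bool, ∑ y, μ c y - 1 / 8 * (2 * ρ ^ 2 * (9 / 10 / n))) := by
        rw [hμ, hmass]
        have hn0 : (n : ℝ) ≠ 0 := by positivity
        simp only [sum_const, card_univ, Fintype.card_fin, nsmul_eq_mul]
        field_simp
        ring
    _ ≤ ∑ k : Fin n, ∑ c : Bool, (1 / 4 * ∑ y, μ c y - 1 / 8 * X c k) := by
        refine Finset.sum_le_sum fun k _ => ?_
        rw [Finset.sum_sub_distrib, ← Finset.mul_sum, ← Finset.mul_sum]
        linarith [hk k]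
    _ ≤ ∑ k : Fin n, ∑ c : Bool, smseTerm (μ c) k :=
        Finset.sum_le_sum fun k _ => Finset.sum_le_sum fun c _ => smseTerm_lower _ (hnn c) k
    _ = _ := Finset.sum_comm

lemma sum_bit {n : ℕ} (k : Fin n) (f : Bool → ℝ) :
    ∑ y : Fin n → Bool, f (y k) = 2 ^ n * ((f true + f false) / 2) := by
  have h1 := sum_flipAt k (fun y : Fin n → Bool => f (y k))
  have h2 : ∑ y : Fin n → Bool, (f (y k) + f (flipAt k y k)) = 2 ^ n * (f true + f false) := by
    have : ∀ y : Fin n → Bool, f (y k) + f (flipAt k y k) = f true + f false := by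
      intro y
      have hk : flipAt k y k = !y k := by simp [flipAt]
      rw [hk]; cases y k <;> simp [add_comm]
    simp only [this]
    simp; ring
  rw [Finset.sum_add_distrib, h1] at h2
  linarith

/-- Given that bit `k` of `X` is `c`, only the bit `k` of `Y` is biased. -/
lemma noisy_dictator {n : ℕ} (α : ℝ) (k : Fin n) (c : Bool) (y : Fin n → Bool) :
    noisyPMF n α (fun x => x k) c y = ((2 : ℝ) ^ n)⁻¹ * (if y k = c then 1 - α else α) := by
  have h := Finset.prod_univ_sum (fun _ : Fin n => (univ : Finset Bool))
      (fun i b => (if y i = b then 1 - α else α) * (if i = k then (if b = c then 1 else 0) else 1))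
  rw [Fintype.piFinset_univ] at h
  have hl : ∏ i : Fin n, ∑ b : Bool,
      ((if y i = b then 1 - α else α) * (if i = k then (if b = c then 1 else 0) else 1))
      = if y k = c then 1 - α else α := by
    rw [Finset.prod_eq_single k]
    · cases c <;> simp
    · intro i _ hik
      cases hy : y i <;> simp [hik]
    · simp
  rw [hl] at h
  rw [h, noisyPMF, Finset.mul_sum]
  refine Finset.sum_congr rfl fun x _ => ?_
  rw [Finset.prod_mul_distrib]
  have : ∏ i : Fin n, (if i = k then (if x i = c then (1 : ℝ) else 0) else 1)
      = if x k = c then 1 else 0 := by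
    rw [Finset.prod_ite_eq' univ k (fun i => if x i = c then (1 : ℝ) else 0)]
    simp
  rw [this]
  split_ifs <;> simp

lemma smseTerm_upper {n : ℕ} (μ : (Fin n → Bool) → ℝ) (hμ : ∀ y, 0 ≤ μ y) (k : Fin n) :
    smseTerm μ k ≤ 1 / 4 * ∑ y, μ y := by
  rw [smseTerm, Finset.mul_sum]
  refine Finset.sum_le_sum fun y _ => ?_
  have : condQ μ k y * (1 - condQ μ k y) ≤ 1 / 4 := by
    nlinarith [sq_nonneg (condQ μ k y - 1 / 2)]
  have := mul_le_mul_of_nonneg_left this (hμ y)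
  linarith

lemma dictator_upper {n : ℕ} (ρ : ℝ) (h0 : 0 < ρ) (h1 : ρ < 1) (hn : 0 < n) :
    noisySMSE n ((1 - ρ) / 2) (fun x => x ⟨0, hn⟩) ≤ (n : ℝ) / 4 - ρ ^ 2 / 4 := by
  set k₀ : Fin n := ⟨0, hn⟩ with hk₀
  set μ := noisyPMF n ((1 - ρ) / 2) (fun x => x k₀) with hμ
  have hnn : ∀ c y, 0 ≤ μ c y := noisyPMF_nonneg (by linarith) (by linarith) _
  have hform : ∀ c y, μ c y = ((2 : ℝ) ^ n)⁻¹ *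
      (if y k₀ = c then 1 - (1 - ρ) / 2 else (1 - ρ) / 2) := fun c y => noisy_dictator _ k₀ c y
  have h2n : (2 : ℝ) ^ n ≠ 0 := by positivity
  have hD : ∀ c, ∑ y, μ c y = 1 / 2 := by
    intro c
    simp only [hform]
    rw [← Finset.mul_sum,
      sum_bit k₀ (fun b => if b = c then 1 - (1 - ρ) / 2 else (1 - ρ) / 2)]
    cases c <;> simp
  -- the first bit is predicted from the empty prefix, with constant `Q = (1 ± ρ) / 2`
  have hfirst : ∀ c, smseTerm (μ c) k₀ = 1 / 4 * ∑ y, μ c y - ρ ^ 2 / 8 := by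
    intro c
    have hQ : ∀ y, condQ (μ c) k₀ y = if c = true then (1 + ρ) / 2 else (1 - ρ) / 2 := by
      intro y
      have hlt : ∀ i : Fin n, ¬ i < k₀ := fun i h => by simp [hk₀, Fin.lt_def] at h
      have hN : ∑ y : Fin n → Bool, (if y k₀ = true then μ c y else 0)
          = (if c = true then (1 + ρ) / 2 else (1 - ρ) / 2) / 2 := by
        simp only [hform]
        rw [sum_bit k₀ (fun b => if b = true then ((2 : ℝ) ^ n)⁻¹ *
          (if b = c then 1 - (1 - ρ) / 2 else (1 - ρ) / 2) else 0)]
        cases c <;> simp <;> field_simp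
        ring
      rw [condQ]
      simp only [hlt, false_imp_iff, implies_true, true_and, Finset.filter_true]
      rw [Finset.sum_filter, hN, hD]
      ring
    rw [smseTerm]
    simp only [hQ]
    rw [← Finset.sum_mul, hD]
    cases c <;> simp <;> ring
  calc ∑ c : Bool, ∑ k : Fin n, smseTerm (μ c) k
      ≤ ∑ c : Bool, ∑ k : Fin n, (1 / 4 * ∑ y, μ c y - if k = k₀ then ρ ^ 2 / 8 else 0) := by
        refine Finset.sum_le_sum fun c _ => Finset.sum_le_sum fun k _ => ?_
        split_ifs with hk
        · rw [hk, hfirst]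
        · rw [sub_zero]; exact smseTerm_upper _ (hnn c) k
    _ = _ := by
        simp only [hD, Finset.sum_sub_distrib]
        simp
        ring

theorem stmt8 : ∃ abar : ℝ, 0 < abar ∧ abar < 1/2 ∧
    ∀ α : ℝ, abar < α → α < 1/2 →
    ∃ δ : ℝ, 0 < δ ∧ ∃ N : ℕ, ∀ n : ℕ, N ≤ n → ∀ hodd : Odd n,
      noisySMSE n α (majF n) - noisySMSE n α (fun x => x ⟨0, hodd.pos⟩) ≥ δ := by
  refine ⟨1 / 2 - 1 / 2000, by norm_num, by norm_num, fun α hα hα' => ?_⟩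
  set ρ := 1 - 2 * α with hρ
  have h0 : 0 < ρ := by linarith
  have h1 : ρ ≤ 1 / 1000 := by linarith
  have hαρ : α = (1 - ρ) / 2 := by rw [hρ]; ring
  refine ⟨ρ ^ 2 / 40, by positivity, 3, fun n hn hodd => ?_⟩
  have hM := maj_lower hodd hn ρ h0 h1
  have hD := dictator_upper ρ h0 (by linarith) hodd.pos
  rw [hαρ]
  linarith
end
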